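/- arXiv:2108.08564 — 3 statements merged into one kernel-verified Lean document; each statement's English description precedes it below -/
import Mathlib

section
/- Let I be a nonzero proper homogeneous ideal of R = K[X_1,...,X_s] with degree excess function ε(I;n) = d(I^n) − p(I)n. Then for all positive integers m ≤ n, one has n·ε(I;m) ≥ m·ε(I;n). -/
open MvPolynomial

/-- The maximal generating degree `d(I)` of a homogeneous ideal. -/
noncomputable def maxGenDeg {K : Type*} [Field K] {σ : Type*}
    (I : Ideal (MvPolynomial σ K)) : ℕ :=
  sInf {d | I = Ideal.span {f | f ∈ I ∧ f.totalDegree ≤ d}}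

/-!
Let `I` be homogeneous and let `A₊` be the ideal generated by the variables. By graded Nakayama,
`d(I ^ n)` is the largest degree of a product of `n` homogeneous elements of `I` that is not in
`A₊ I ^ n`. In such a product, the `m` factors of largest degree have a product outside `A₊ I ^ m`,
hence of degree at most `d(I ^ m)`; they carry at least the proportion `m / n` of the total degree,
so `m d(I ^ n) ≤ n d(I ^ m)`. Passing from `d` to `ε` subtracts the same multiple of `m n` from both
sides.
-/

lemma exists_subset_card_eq_nsmul_sum_le {ι M : Type*} [AddCommMonoid M] [LinearOrder M]
    [IsOrderedAddMonoid M] (f : ι → M) (s : Finset ι) {m : ℕ} (hm : m ≤ s.card) :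
    ∃ t ⊆ s, t.card = m ∧ m • ∑ i ∈ s, f i ≤ s.card • ∑ i ∈ t, f i := by
  classical
  induction s using Finset.induction_on_min_value f with
  | empty => exact ⟨∅, subset_rfl, (Nat.le_zero.1 hm).symm, by simp⟩
  | insert a s has hmin ih =>
    rcases hm.eq_or_lt with rfl | hlt
    · exact ⟨_, subset_rfl, rfl, le_rfl⟩
    rw [Finset.card_insert_of_notMem has] at hlt ⊢
    obtain ⟨t, hts, rfl, ht⟩ := ih (Nat.lt_succ_iff.1 hlt)
    refine ⟨t, hts.trans (Finset.subset_insert a s), rfl, ?_⟩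
    calc t.card • ∑ i ∈ insert a s, f i = t.card • f a + t.card • ∑ i ∈ s, f i := by
          rw [Finset.sum_insert has, nsmul_add]
      _ ≤ ∑ i ∈ t, f i + s.card • ∑ i ∈ t, f i :=
          add_le_add (Finset.card_nsmul_le_sum t f (f a) fun i hi => hmin i (hts hi)) ht
      _ = (s.card + 1) • ∑ i ∈ t, f i := (succ_nsmul' _ _).symm

section Graded

open DirectSum
open scoped HomogeneousIdeal

variable {A τ : Type*} [CommSemiring A] [SetLike τ A]

/-- A homogeneous ideal `I` of an `ℕ`-graded ring is generated in degrees at most `d`, i.e. its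
maximal generating degree is at most `d`. Only one inclusion is required, as the other one is
automatic. -/
def GeneratedInDegreeLE (𝒜 : ℕ → τ) (I : Ideal A) (d : ℕ) : Prop :=
  I ≤ Ideal.span {x | x ∈ I ∧ ∃ i ≤ d, x ∈ 𝒜 i}

variable [AddSubmonoidClass τ A] {𝒜 : ℕ → τ} [GradedRing 𝒜] {I J : Ideal A}

lemma isHomogeneous_pow (hI : I.IsHomogeneous 𝒜) (n : ℕ) : (I ^ n).IsHomogeneous 𝒜 := by
  induction n with
  | zero => simpa only [pow_zero, Ideal.one_eq_top] using Ideal.IsHomogeneous.top 𝒜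
  | succ n ih => simpa only [pow_succ] using ih.mul hI

lemma le_of_forall_homogeneous_mem (hI : I.IsHomogeneous 𝒜)
    (h : ∀ i, ∀ x ∈ 𝒜 i, x ∈ I → x ∈ J) : I ≤ J := by
  classical
  intro x hx
  rw [← sum_support_decompose 𝒜 x]
  exact sum_mem fun i _ => h i _ (SetLike.coe_mem _) (hI i hx)

lemma decompose_mem_of_mem_irrelevant_mul (hI : I.IsHomogeneous 𝒜) {e : ℕ}
    (h : ∀ i < e, ∀ x ∈ 𝒜 i, x ∈ I → x ∈ J) {y : A} (hy : y ∈ 𝒜₊.toIdeal * I) :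
    (decompose 𝒜 y e : A) ∈ J := by
  induction hy using Submodule.mul_induction_on' with
  | add x _ y _ hx hy =>
    simpa only [decompose_add, DirectSum.add_apply, AddMemClass.coe_add] using add_mem hx hy
  | mem_mul_mem a ha b hb =>
    rw [decompose_mul, coe_mul_apply_eq_sum_antidiagonal]
    refine sum_mem fun ij hij => ?_
    obtain ⟨i, j⟩ := ij
    have hadd : i + j = e := Finset.HasAntidiagonal.mem_antidiagonal.1 hij
    rcases Nat.eq_zero_or_pos i with rfl | hi
    · have ha₀ : (decompose 𝒜 a 0 : A) = 0 := ha
      simp only [ha₀, zero_mul, zero_mem]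
    · exact J.mul_mem_left _ (h j (by lia) _ (SetLike.coe_mem _) (hI j hb))

-- Graded Nakayama: induction on the degree takes the place of finite generation.
lemma le_of_le_sup_irrelevant_mul (hI : I.IsHomogeneous 𝒜) (hJ : J.IsHomogeneous 𝒜)
    (h : I ≤ J ⊔ 𝒜₊.toIdeal * I) : I ≤ J := by
  refine le_of_forall_homogeneous_mem hI fun e => ?_
  induction e using Nat.strong_induction_on with
  | _ e ih =>
    intro x hxe hxI
    obtain ⟨y, hy, z, hz, rfl⟩ := Submodule.mem_sup.1 (h hxI)
    rw [← decompose_of_mem_same 𝒜 hxe, decompose_add, DirectSum.add_apply,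
      AddMemClass.coe_add]
    exact add_mem (hJ e hy) (decompose_mem_of_mem_irrelevant_mul hI ih hz)

namespace GeneratedInDegreeLE

lemma mem_irrelevant_mul {d e : ℕ} (h : GeneratedInDegreeLE 𝒜 I d) (hde : d < e) {x : A}
    (hxe : x ∈ 𝒜 e) (hx : x ∈ I) : x ∈ 𝒜₊.toIdeal * I := by
  suffices ∀ y ∈ Ideal.span {x | x ∈ I ∧ ∃ i ≤ d, x ∈ 𝒜 i},
      (decompose 𝒜 y e : A) ∈ 𝒜₊.toIdeal * I by
    simpa only [decompose_of_mem_same 𝒜 hxe] using this x (h hx)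
  intro y hy
  induction hy using Submodule.closure_induction with
  | zero => simp
  | add x y _ _ hx hy =>
    simpa only [decompose_add, DirectSum.add_apply, AddMemClass.coe_add] using add_mem hx hy
  | smul_mem a b hb =>
    obtain ⟨hbI, i, hid, hbi⟩ := hb
    rw [smul_eq_mul, coe_decompose_mul_of_right_mem_of_le 𝒜 hbi (by lia)]
    exact Ideal.mul_mem_mul
      (HomogeneousIdeal.mem_irrelevant_of_mem 𝒜 (by lia : 0 < e - i) (SetLike.coe_mem _)) hbI

lemma prod_mem_irrelevant_mul_pow {m n D : ℕ} (h : GeneratedInDegreeLE 𝒜 (I ^ m) D) (hmn : m ≤ n)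
    {x : Fin n → A} {deg : Fin n → ℕ} (hxI : ∀ k, x k ∈ I) (hx : ∀ k, x k ∈ 𝒜 (deg k))
    (hD : n * D < m * ∑ k, deg k) : ∏ k, x k ∈ 𝒜₊.toIdeal * I ^ n := by
  classical
  obtain ⟨t, -, htm, ht⟩ := exists_subset_card_eq_nsmul_sum_le deg Finset.univ (m := m) (by simpa)
  have hDt : D < ∑ k ∈ t, deg k := by
    have : n * D < n * ∑ k ∈ t, deg k := hD.trans_le (by simpa using ht)
    exact lt_of_mul_lt_mul_left' this
  have prod_mem_pow (u : Finset (Fin n)) : ∏ k ∈ u, x k ∈ I ^ u.card := by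
    simpa using Ideal.prod_mem_prod (s := u) fun k _ => hxI k
  have ht_mem : ∏ k ∈ t, x k ∈ 𝒜₊.toIdeal * I ^ m :=
    h.mem_irrelevant_mul hDt (SetLike.prod_mem_graded 𝒜 deg x fun k _ => hx k)
      (htm ▸ prod_mem_pow t)
  have hpow : I ^ m * I ^ tᶜ.card = I ^ n := by
    rw [← pow_add, Finset.card_compl, htm, Fintype.card_fin, Nat.add_sub_cancel' hmn]
  rw [← Finset.prod_mul_prod_compl t, ← hpow, ← mul_assoc]
  exact Ideal.mul_mem_mul ht_mem (prod_mem_pow tᶜ)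

theorem pow {m n D : ℕ} (hI : I.IsHomogeneous 𝒜) (h : GeneratedInDegreeLE 𝒜 (I ^ m) D)
    (hm : 0 < m) (hmn : m ≤ n) : GeneratedInDegreeLE 𝒜 (I ^ n) (n * D / m) := by
  refine le_of_le_sup_irrelevant_mul (isHomogeneous_pow hI n)
    (Ideal.homogeneous_span 𝒜 _ fun x hx => hx.2.imp fun _ => And.right) ?_
  obtain ⟨S, hS⟩ := (Ideal.IsHomogeneous.iff_exists 𝒜 I).1 hI
  conv_lhs => rw [hS, Ideal.span, Submodule.span_pow]
  refine Submodule.span_le.2 fun y hy => ?_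
  obtain ⟨x, hxS, rfl⟩ := Set.mem_pow_iff_prod.1 hy
  have hxI (k) : x k ∈ I := hS ▸ Ideal.subset_span (hxS k)
  have hx (k) : ∃ i, x k ∈ 𝒜 i := by
    obtain ⟨y, -, hy⟩ := hxS k
    exact hy ▸ y.2
  choose deg hdeg using hx
  rcases le_or_gt (m * ∑ k, deg k) (n * D) with hle | hlt
  · refine Ideal.mem_sup_left (Ideal.subset_span ⟨?_, ∑ k, deg k, ?_, ?_⟩)
    · simpa using Ideal.prod_mem_prod (s := Finset.univ) fun k _ => hxI k
    · rwa [Nat.le_div_iff_mul_le hm, mul_comm]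
    · exact SetLike.prod_mem_graded 𝒜 deg x fun k _ => hdeg k
  · exact Ideal.mem_sup_right (h.prod_mem_irrelevant_mul_pow hmn hxI hdeg hlt)

end GeneratedInDegreeLE

end Graded

section MvPolynomial

attribute [local instance] MvPolynomial.gradedAlgebra

variable {K σ : Type*} [Field K] {I : Ideal (MvPolynomial σ K)}

lemma isHomogeneous_span_range {ι : Type*} {f : ι → MvPolynomial σ K} {deg : ι → ℕ}
    (hf : ∀ i, (f i).IsHomogeneous (deg i)) :
    (Ideal.span (Set.range f)).IsHomogeneous (homogeneousSubmodule σ K) :=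
  Ideal.homogeneous_span _ _ (Set.forall_mem_range.2 fun i => ⟨deg i, hf i⟩)

lemma generatedInDegreeLE_iff_eq_span_totalDegree_le
    (hI : I.IsHomogeneous (homogeneousSubmodule σ K)) {d : ℕ} :
    GeneratedInDegreeLE (homogeneousSubmodule σ K) I d ↔
      I = Ideal.span {f | f ∈ I ∧ f.totalDegree ≤ d} := by
  constructor
  · refine fun h => le_antisymm (h.trans (Ideal.span_mono ?_)) (Ideal.span_le.2 fun f hf => hf.1)
    rintro f ⟨hfI, i, hid, hfi⟩
    exact ⟨hfI, hfi.totalDegree_le.trans hid⟩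
  · refine fun h => h.le.trans (Ideal.span_le.2 ?_)
    rintro f ⟨hfI, hfd⟩
    rw [← sum_homogeneousComponent f]
    refine sum_mem fun i hi => Ideal.subset_span
      ⟨homogeneousComponent_mem_of_mem hI hfI i, i, ?_, homogeneousComponent_mem i f⟩
    exact (Nat.lt_succ_iff.1 (Finset.mem_range.1 hi)).trans hfd

lemma maxGenDeg_le {d : ℕ} (hI : I.IsHomogeneous (homogeneousSubmodule σ K))
    (h : GeneratedInDegreeLE (homogeneousSubmodule σ K) I d) : maxGenDeg I ≤ d :=
  Nat.sInf_le ((generatedInDegreeLE_iff_eq_span_totalDegree_le hI).1 h)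

lemma exists_eq_span_totalDegree_le (hfg : I.FG) :
    ∃ d, I = Ideal.span {f | f ∈ I ∧ f.totalDegree ≤ d} := by
  obtain ⟨T, rfl⟩ := hfg
  exact ⟨T.sup totalDegree, le_antisymm
    (Ideal.span_mono fun f hf => ⟨Ideal.subset_span hf, Finset.le_sup (f := totalDegree) hf⟩)
    (Ideal.span_le.2 fun f hf => hf.1)⟩

lemma generatedInDegreeLE_maxGenDeg (hI : I.IsHomogeneous (homogeneousSubmodule σ K))
    (hfg : I.FG) : GeneratedInDegreeLE (homogeneousSubmodule σ K) I (maxGenDeg I) :=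
  (generatedInDegreeLE_iff_eq_span_totalDegree_le hI).2
    (Nat.sInf_mem (exists_eq_span_totalDegree_le hfg))

theorem mul_maxGenDeg_pow_le_mul_maxGenDeg_pow
    (hI : I.IsHomogeneous (homogeneousSubmodule σ K)) (hfg : I.FG) {m n : ℕ} (hmn : m ≤ n) :
    m * maxGenDeg (I ^ n) ≤ n * maxGenDeg (I ^ m) := by
  rcases Nat.eq_zero_or_pos m with rfl | hm
  · simp
  have hgen := generatedInDegreeLE_maxGenDeg (isHomogeneous_pow hI m) hfg.pow
  have hdiv := maxGenDeg_le (isHomogeneous_pow hI n) (hgen.pow hI hm hmn)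
  rwa [Nat.le_div_iff_mul_le hm, mul_comm] at hdiv

theorem degree_excess_ratio_monotone_general
    (hI : I.IsHomogeneous (homogeneousSubmodule σ K)) (hfg : I.FG) (c : ℤ) {m n : ℕ}
    (hmn : m ≤ n) :
    (m : ℤ) * ((maxGenDeg (I ^ n) : ℤ) - c * n) ≤
      (n : ℤ) * ((maxGenDeg (I ^ m) : ℤ) - c * m) := by
  have h : (m : ℤ) * maxGenDeg (I ^ n) ≤ n * maxGenDeg (I ^ m) :=
    mod_cast mul_maxGenDeg_pow_le_mul_maxGenDeg_pow hI hfg hmn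
  linarith

end MvPolynomial

/-- for all `1 ≤ m ≤ n`, `n·ε(I;m) ≥ m·ε(I;n)`, where
`ε(I;n) = d(I^n) − p(I)·n`. -/
theorem degree_excess_ratio_monotone
    {K : Type*} [Field K] (s t : ℕ) (f : Fin t → MvPolynomial (Fin s) K)
    (deg : Fin t → ℕ) (hhom : ∀ i, (f i).IsHomogeneous (deg i))
    (I : Ideal (MvPolynomial (Fin s) K)) (hI : I = Ideal.span (Set.range f))
    (hne : I ≠ ⊥) (hpr : I ≠ ⊤)
    (hmin : ∀ i, f i ∉ Ideal.span (f '' {j | j ≠ i}))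
    (M : Ideal (MvPolynomial (Fin s) K)) (hM : M = Ideal.span (Set.range X))
    (p : ℕ) (hp : p = sSup {d | ∃ i, deg i = d ∧ ∀ n ≥ 1, f i ^ n ∉ M * I ^ n}) :
    ∀ m n : ℕ, 1 ≤ m → m ≤ n →
      (m : ℤ) * ((maxGenDeg (I ^ n) : ℤ) - p * n) ≤
        (n : ℤ) * ((maxGenDeg (I ^ m) : ℤ) - p * m) := by
  intro m n _ hmn
  exact degree_excess_ratio_monotone_general (hI ▸ isHomogeneous_span_range hhom)
    (IsNoetherian.noetherian I) p hmn
end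

section
/- For any non-increasing function f : ℕ → ℕ, there exists a field K, a polynomial ring R over K, and a monomial ideal I of R such that the degree excess function ε(I;n) = d(I^n) − p(I)n equals f(n) for all n ≥ 1. -/
open MvPolynomial

/-- An ideal of a polynomial ring is a monomial ideal if it is generated by monomials. -/
def IsMonomialIdeal {K : Type*} [Field K] {σ : Type*}
    (I : Ideal (MvPolynomial σ K)) : Prop :=
  ∃ S : Set (σ →₀ ℕ), I = Ideal.span ((fun α => monomial α (1 : K)) '' S)

/-!
If `I` is generated by the monomials with exponents in `S`, then `d(I ^ n)` is the largest degree of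
a minimal element of the `n`-fold sumset `n • S`. For a product of ideals in disjoint variables
these sets are products, so degree excess functions add up. A non-increasing `f` is the finite sum
over `j` of the indicator functions of the lower sets `{m | j < f m}`, so it is enough to realise
the indicator function of a lower set of `ℕ`.

Let `A` be generated by monomials of degree `p` and let `w` be a monomial of degree `p` with
`w ^ 2 ∈ A ^ 2`. With a new variable `z`, the ideal `I = A + (w z)` satisfies
`I ^ n = A ^ n + w z A ^ (n - 1)`, so its degree excess at `n` is `0` or `1`, and it is `1` exactly
when `w A ^ (n - 1)` is not contained in `A ^ n`. For `A = (x ^ 2, y ^ 2)` and `w = x y` parity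
shows that this holds for all `n`. For `A = (x ^ q, y ^ q) (x, y)` the exponents of `x` in the
generators of `A ^ n` fill the intervals `[i q, i q + n]`, `0 ≤ i ≤ n`; a monomial `w` of degree
`q + 1` in the middle, between `x ^ q y` and `x y ^ q`, detects the gaps between these intervals,
which exist exactly for `n < q - 1`.
-/

open Finset

section Minimal

/-- The degrees of the minimal elements of `S`. If `S` is a set of exponents, these are the degrees
of the minimal monomial generators of the ideal spanned by `S`. -/
def minimalDegrees {M : Type*} [LE M] (deg : M → ℕ) (S : Set M) : Set ℕ :=
  deg '' {v | Minimal (· ∈ S) v}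

theorem minimalDegrees_image {M N : Type*} [Preorder M] [Preorder N] {e : M → N}
    (he : ∀ a b, e a ≤ e b ↔ a ≤ b) (deg : N → ℕ) (S : Set M) :
    minimalDegrees deg (e '' S) = minimalDegrees (deg ∘ e) S := by
  rw [minimalDegrees, ← image_monotone_setOfPred_minimal_mem fun a b _ _ ↦ he a b,
    minimalDegrees, Set.image_comp]

variable {ι : Type*} {M : ι → Type*} [∀ i, Preorder (M i)]

theorem minimal_mem_univ_pi_iff {S : ∀ i, Set (M i)} {v : ∀ i, M i} :
    Minimal (· ∈ Set.univ.pi S) v ↔ ∀ i, Minimal (· ∈ S i) (v i) := by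
  classical
  constructor
  · refine fun h i ↦ ⟨h.prop i trivial, fun x hx hxv ↦ ?_⟩
    have hmem : Function.update v i x ∈ Set.univ.pi S :=
      (Set.update_mem_pi_iff_of_mem h.prop).2 fun _ ↦ hx
    simpa using h.le_of_le hmem (update_le_self_iff.2 hxv) i
  · exact fun h ↦ ⟨fun i _ ↦ (h i).prop,
      fun w hw hwv i ↦ (h i).le_of_le (hw i trivial) (hwv i)⟩

theorem isGreatest_minimalDegrees_univ_pi [Fintype ι] {deg : ∀ i, M i → ℕ} {S : ∀ i, Set (M i)}
    {d : ι → ℕ} (h : ∀ i, IsGreatest (minimalDegrees (deg i) (S i)) (d i)) :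
    IsGreatest (minimalDegrees (fun v ↦ ∑ i, deg i (v i)) (Set.univ.pi S)) (∑ i, d i) := by
  constructor
  · choose v hv hvd using fun i ↦ (h i).1
    exact ⟨v, minimal_mem_univ_pi_iff.2 hv, sum_congr rfl fun i _ ↦ hvd i⟩
  · rintro _ ⟨v, hv, rfl⟩
    exact sum_le_sum fun i _ ↦ (h i).2 ⟨v i, minimal_mem_univ_pi_iff.1 hv i, rfl⟩

end Minimal

section MonomialIdeal

variable {σ : Type*} (K : Type*) [Field K]

/-- The monomial ideal of `K[x_i : i ∈ σ]` generated by the monomials with exponent in `S`. -/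
noncomputable def monomialIdeal (S : Set (σ →₀ ℕ)) : Ideal (MvPolynomial σ K) :=
  Ideal.span ((fun α ↦ monomial α 1) '' S)

variable {K} in
theorem mem_monomialIdeal {S : Set (σ →₀ ℕ)} {x : MvPolynomial σ K} :
    x ∈ monomialIdeal K S ↔ ∀ α ∈ x.support, ∃ β ∈ S, β ≤ α :=
  mem_ideal_span_monomial_image

theorem monomial_mem_monomialIdeal {S : Set (σ →₀ ℕ)} {α : σ →₀ ℕ} (hα : α ∈ S) :
    monomial α 1 ∈ monomialIdeal K S :=
  Ideal.subset_span ⟨α, hα, rfl⟩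

theorem totalDegree_monomial_one (α : σ →₀ ℕ) :
    (monomial α (1 : K)).totalDegree = α.degree :=
  totalDegree_monomial α one_ne_zero

theorem monomialIdeal_eq_span_totalDegree_le_iff {S : Set (σ →₀ ℕ)} {d : ℕ} :
    monomialIdeal K S = Ideal.span {f | f ∈ monomialIdeal K S ∧ f.totalDegree ≤ d} ↔
      d ∈ upperBounds (minimalDegrees Finsupp.degree S) := by
  constructor
  · rintro hspan _ ⟨α, hα, rfl⟩
    have hle : monomialIdeal K S ≤ monomialIdeal K {β | β.degree ≤ d ∧ ∃ γ ∈ S, γ ≤ β} := by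
      rw [hspan, Ideal.span_le]
      rintro f ⟨hf, hfd⟩
      exact mem_monomialIdeal.2 fun β hβ ↦
        ⟨β, ⟨(le_totalDegree hβ).trans hfd, mem_monomialIdeal.1 hf β hβ⟩, le_rfl⟩
    obtain ⟨β, ⟨hβd, γ, hγ, hγβ⟩, hβα⟩ :=
      mem_monomialIdeal.1 (hle (monomial_mem_monomialIdeal K hα.prop)) α
        (by classical simp [coeff_monomial])
    have hαβ : α ≤ β := (hα.le_of_le hγ (hγβ.trans hβα)).trans hγβ
    exact (Finsupp.degree_mono hαβ).trans hβd
  · refine fun hd ↦ le_antisymm (Ideal.span_le.2 ?_) (Ideal.span_le.2 fun f hf ↦ hf.1)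
    rintro _ ⟨α, hα, rfl⟩
    obtain ⟨β, hβα, hβ⟩ := exists_minimal_le_of_wellFoundedLT (· ∈ S) α hα
    have hβd : (monomial β (1 : K)).totalDegree ≤ d :=
      (totalDegree_monomial_one K β).trans_le (hd ⟨β, hβ, rfl⟩)
    exact Ideal.mem_of_dvd _ (monomial_dvd_monomial.2 ⟨Or.inr hβα, dvd_rfl⟩)
      (Ideal.subset_span ⟨monomial_mem_monomialIdeal K hβ.prop, hβd⟩)

theorem maxGenDeg_monomialIdeal {S : Set (σ →₀ ℕ)} {d : ℕ}
    (hd : IsGreatest (minimalDegrees Finsupp.degree S) d) :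
    maxGenDeg (monomialIdeal K S) = d := by
  simp only [maxGenDeg, monomialIdeal_eq_span_totalDegree_le_iff]
  exact hd.isLUB.csInf_eq

open scoped Pointwise in
theorem monomialIdeal_pow (S : Set (σ →₀ ℕ)) (n : ℕ) :
    monomialIdeal K S ^ n = monomialIdeal K (n • S) := by
  induction n with
  | zero => simp [monomialIdeal, Ideal.one_eq_top]
  | succ n ih =>
    rw [pow_succ, ih, monomialIdeal, monomialIdeal, Ideal.span_mul_span', monomialIdeal, succ_nsmul,
      ← Set.image2_mul, ← Set.image2_add, Set.image_image2, Set.image2_image_left,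
      Set.image2_image_right]
    simp only [monomial_mul, one_mul]

theorem maxGenDeg_bot : maxGenDeg (⊥ : Ideal (MvPolynomial σ K)) = 0 :=
  Nat.sInf_eq_zero.2 (Or.inl (Eq.symm (Ideal.span_eq_bot.2 fun _ hf ↦ hf.1)))

theorem maxGenDeg_top : maxGenDeg (⊤ : Ideal (MvPolynomial σ K)) = 0 := by
  refine Nat.sInf_eq_zero.2 (Or.inl (Eq.symm ((Ideal.eq_top_iff_one _).2 ?_)))
  exact Ideal.subset_span ⟨trivial, totalDegree_one.le⟩

end MonomialIdeal

open scoped Pointwise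

section Sumset

variable {M N : Type*} [AddCommMonoid M] [AddCommMonoid N]

theorem mem_nsmul_insert {A : Set M} {x y : M} {n : ℕ} :
    y ∈ n • insert x A ↔ ∃ k l, k + l = n ∧ ∃ a ∈ k • A, a + l • x = y := by
  constructor
  · induction n generalizing y with
    | zero => exact fun hy ↦ ⟨0, 0, rfl, 0, by simp, by simpa using hy.symm⟩
    | succ n ih =>
      rw [succ_nsmul]
      rintro ⟨_, hz, b, hb, rfl⟩
      obtain ⟨k, l, rfl, a, ha, rfl⟩ := ih hz
      rcases hb with rfl | hb
      · exact ⟨k, l + 1, by ring, a, ha, by simp only [succ_nsmul, add_assoc]⟩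
      · exact ⟨k + 1, l, by ring, a + b, by simpa only [succ_nsmul] using Set.add_mem_add ha hb,
          add_right_comm a b _⟩
  · rintro ⟨k, l, rfl, a, ha, rfl⟩
    rw [add_nsmul]
    exact Set.add_mem_add (Set.nsmul_subset_nsmul_left (Set.subset_insert x A) ha)
      (Set.nsmul_mem_nsmul (Set.mem_insert x A))

theorem mem_nsmul_pair {x y z : M} {n : ℕ} :
    z ∈ n • ({x, y} : Set M) ↔ ∃ i j, i + j = n ∧ i • x + j • y = z := by
  simp only [mem_nsmul_insert, Set.nsmul_singleton, Set.mem_singleton_iff, exists_eq_left]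
  rw [exists_comm]
  simp only [add_comm]

theorem map_eq_nsmul_of_mem_nsmul (φ : M →+ N) {A : Set M} {c : N} (hA : ∀ a ∈ A, φ a = c)
    {n : ℕ} {a : M} (ha : a ∈ n • A) : φ a = n • c := by
  have himage : φ '' A ⊆ {c} := Set.image_subset_iff.2 hA
  have hφa : φ a ∈ n • φ '' A := Set.image_nsmul φ A n ▸ Set.mem_image_of_mem φ ha
  simpa using Set.nsmul_subset_nsmul_left himage hφa

theorem nsmul_univ_pi {ι : Type*} {M : ι → Type*} [∀ i, AddMonoid (M i)]
    (S : ∀ i, Set (M i)) (n : ℕ) : n • Set.univ.pi S = Set.univ.pi fun i ↦ n • S i := by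
  induction n with
  | zero => ext v; simp [funext_iff]
  | succ n ih =>
    ext v
    simp only [succ_nsmul, ih, Set.mem_add, Set.mem_univ_pi]
    constructor
    · rintro ⟨x, hx, y, hy, rfl⟩ i
      exact ⟨x i, hx i, y i, hy i, rfl⟩
    · intro h
      choose x hx y hy hxy using h
      exact ⟨x, hx, y, hy, funext hxy⟩

end Sumset

/-- The sets of exponents `S` with `d(I^n) = p * n + f n` for all `n ≥ 1`, where `I` is the monomial
ideal with exponents `S` and the degree of an exponent is measured by `deg`. The `n`-fold sumset
`n • S` is the set of exponents generating `I^n`. -/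
def HasDegreeExcess {M : Type*} [AddMonoid M] [LE M] (deg : M → ℕ) (S : Set M) (p : ℕ)
    (f : ℕ → ℕ) : Prop :=
  ∀ n, 1 ≤ n → IsGreatest (minimalDegrees deg (n • S)) (p * n + f n)

namespace HasDegreeExcess

theorem univ_pi {ι : Type*} [Fintype ι] {M : ι → Type*} [∀ i, AddMonoid (M i)]
    [∀ i, Preorder (M i)] {deg : ∀ i, M i → ℕ} {S : ∀ i, Set (M i)} {p : ι → ℕ} {f : ι → ℕ → ℕ}
    (h : ∀ i, HasDegreeExcess (deg i) (S i) (p i) (f i)) :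
    HasDegreeExcess (fun v ↦ ∑ i, deg i (v i)) (Set.univ.pi S) (∑ i, p i)
      (fun n ↦ ∑ i, f i n) := by
  intro n hn
  rw [nsmul_univ_pi, sum_mul, ← sum_add_distrib]
  exact isGreatest_minimalDegrees_univ_pi fun i ↦ h i n hn

theorem image {M N : Type*} [AddMonoid M] [AddMonoid N] [Preorder M] [Preorder N]
    {deg : M → ℕ} {S : Set M} {p : ℕ} {f : ℕ → ℕ} (h : HasDegreeExcess deg S p f)
    (e : M ≃+o N) {deg' : N → ℕ} (hdeg : ∀ v, deg' (e v) = deg v) :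
    HasDegreeExcess deg' (e '' S) p f := by
  intro n hn
  rw [← Set.image_nsmul e, minimalDegrees_image fun a b ↦ map_le_map_iff e]
  exact (funext hdeg : deg' ∘ e = deg) ▸ h n hn

theorem maxGenDeg_pow {σ : Type*} (K : Type*) [Field K] {S : Set (σ →₀ ℕ)} {p : ℕ} {f : ℕ → ℕ}
    (h : HasDegreeExcess Finsupp.degree S p f) {n : ℕ} (hn : 1 ≤ n) :
    maxGenDeg (monomialIdeal K S ^ n) = p * n + f n := by
  rw [monomialIdeal_pow, maxGenDeg_monomialIdeal K (h n hn)]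

end HasDegreeExcess

section AdjoinMulVar

variable {M : Type*} [AddCommMonoid M]

/-- The exponents of the ideal `A + (w z)`, for a set of exponents `A` of an ideal of `R`, a
monomial of `R` with exponent `w`, and the variable `z` of `R[z]`; the second component of `M × ℕ`
is the exponent of `z`. -/
def adjoinMulVar (A : Set M) (w : M) : Set (M × ℕ) :=
  insert (w, 1) (AddMonoidHom.inl M ℕ '' A)

variable {A : Set M} {w x : M} {n l : ℕ}

theorem mem_nsmul_adjoinMulVar :
    (x, l) ∈ n • adjoinMulVar A w ↔ ∃ k, k + l = n ∧ ∃ a ∈ k • A, a + l • w = x := by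
  simp only [adjoinMulVar, mem_nsmul_insert, ← Set.image_nsmul, Set.exists_mem_image]
  simp only [AddMonoidHom.inl_apply, Prod.smul_mk, Prod.mk_add_mk, Prod.mk.injEq, zero_add,
    smul_eq_mul, mul_one]
  constructor
  · rintro ⟨k, l', hkl, a, ha, hx, rfl⟩
    exact ⟨k, hkl, a, ha, hx⟩
  · rintro ⟨k, hkl, a, ha, hx⟩
    exact ⟨k, l, hkl, a, ha, hx, rfl⟩

theorem mem_nsmul_adjoinMulVar_zero : (x, 0) ∈ n • adjoinMulVar A w ↔ x ∈ n • A := by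
  simp [mem_nsmul_adjoinMulVar]

theorem mem_succ_nsmul_adjoinMulVar_one :
    (x, 1) ∈ (n + 1) • adjoinMulVar A w ↔ ∃ a ∈ n • A, a + w = x := by
  simp [mem_nsmul_adjoinMulVar]

theorem mem_nsmul_adjoinMulVar_of_add_two (hsq : 2 • w ∈ 2 • A)
    (hx : (x, l + 2) ∈ n • adjoinMulVar A w) : (x, l) ∈ n • adjoinMulVar A w := by
  obtain ⟨k, rfl, a, ha, rfl⟩ := mem_nsmul_adjoinMulVar.1 hx
  refine mem_nsmul_adjoinMulVar.2 ⟨k + 2, by ring, a + 2 • w, ?_, ?_⟩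
  · rw [add_nsmul]
    exact Set.add_mem_add ha hsq
  · rw [add_nsmul, add_assoc, add_comm (2 • w)]

variable {deg : M →+ ℕ} {p : ℕ} {v : M × ℕ}

theorem deg_fst_of_mem_nsmul_adjoinMulVar (hA : ∀ a ∈ A, deg a = p) (hw : deg w = p)
    (hv : v ∈ n • adjoinMulVar A w) : deg v.1 = p * n := by
  have hgen : ∀ u ∈ adjoinMulVar A w, deg.comp (AddMonoidHom.fst M ℕ) u = p := by
    rintro _ (rfl | ⟨a, ha, rfl⟩)
    exacts [hw, hA a ha]
  simpa [mul_comm] using map_eq_nsmul_of_mem_nsmul _ hgen hv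

variable [PartialOrder M]

theorem minimal_nsmul_adjoinMulVar_iff (hdeg : StrictMono deg) (hA : ∀ a ∈ A, deg a = p)
    (hw : deg w = p) : Minimal (· ∈ n • adjoinMulVar A w) (x, l) ↔
      (x, l) ∈ n • adjoinMulVar A w ∧ ∀ k < l, (x, k) ∉ n • adjoinMulVar A w := by
  refine ⟨fun h ↦ ⟨h.prop, fun k hk hmem ↦ hk.not_ge (h.le_of_le hmem ⟨le_rfl, hk.le⟩).2⟩, ?_⟩
  refine fun ⟨hx, hlt⟩ ↦ ⟨hx, fun ⟨y, k⟩ hy hyx ↦ ?_⟩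
  have hdeg_eq : deg y = deg x := (deg_fst_of_mem_nsmul_adjoinMulVar hA hw hy).trans
    (deg_fst_of_mem_nsmul_adjoinMulVar hA hw hx).symm
  obtain rfl : y = x := hyx.1.eq_of_not_lt fun h ↦ (hdeg h).ne hdeg_eq
  exact ⟨le_rfl, not_lt.1 fun hk ↦ hlt k hk hy⟩

theorem minimalDegrees_nsmul_adjoinMulVar (hA : ∀ a ∈ A, deg a = p) (hw : deg w = p) :
    minimalDegrees (deg.coprod (.id ℕ)) (n • adjoinMulVar A w) =
      (p * n + ·) '' minimalDegrees Prod.snd (n • adjoinMulVar A w) := by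
  rw [minimalDegrees, minimalDegrees, Set.image_image]
  refine Set.image_congr fun v hv ↦ ?_
  simp [← deg_fst_of_mem_nsmul_adjoinMulVar hA hw hv.prop]

theorem isGreatest_minimalDegrees_snd_of_exists (hdeg : StrictMono deg) (hA : ∀ a ∈ A, deg a = p)
    (hw : deg w = p) (hsq : 2 • w ∈ 2 • A) (hn : ∃ a ∈ n • A, a + w ∉ (n + 1) • A) :
    IsGreatest (minimalDegrees Prod.snd ((n + 1) • adjoinMulVar A w)) 1 := by
  obtain ⟨a, ha, haw⟩ := hn
  constructor
  · refine ⟨(a + w, 1), (minimal_nsmul_adjoinMulVar_iff hdeg hA hw).2 ⟨?_, fun k hk ↦ ?_⟩, rfl⟩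
    · exact mem_succ_nsmul_adjoinMulVar_one.2 ⟨a, ha, rfl⟩
    · rwa [Nat.lt_one_iff.1 hk, mem_nsmul_adjoinMulVar_zero]
  · rintro _ ⟨⟨x, l⟩, hx, rfl⟩
    obtain ⟨hmem, hlt⟩ := (minimal_nsmul_adjoinMulVar_iff hdeg hA hw).1 hx
    match l with
    | 0 | 1 => simp
    | l + 2 => exact absurd (mem_nsmul_adjoinMulVar_of_add_two hsq hmem) (hlt l (by lia))

theorem isGreatest_minimalDegrees_snd_of_forall (hdeg : StrictMono deg) (hA : ∀ a ∈ A, deg a = p)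
    (hw : deg w = p) (hsq : 2 • w ∈ 2 • A) (hn : ∀ a ∈ n • A, a + w ∈ (n + 1) • A) :
    IsGreatest (minimalDegrees Prod.snd ((n + 1) • adjoinMulVar A w)) 0 := by
  constructor
  · obtain ⟨a, ha⟩ : A.Nonempty := by
      by_contra h
      simp [Set.not_nonempty_iff_eq_empty.1 h] at hsq
    refine ⟨((n + 1) • a, 0), (minimal_nsmul_adjoinMulVar_iff hdeg hA hw).2 ⟨?_, by simp⟩, rfl⟩
    exact mem_nsmul_adjoinMulVar_zero.2 (Set.nsmul_mem_nsmul ha)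
  · rintro _ ⟨⟨x, l⟩, hx, rfl⟩
    obtain ⟨hmem, hlt⟩ := (minimal_nsmul_adjoinMulVar_iff hdeg hA hw).1 hx
    match l with
    | 0 => simp
    | 1 =>
      obtain ⟨a, ha, rfl⟩ := mem_succ_nsmul_adjoinMulVar_one.1 hmem
      exact absurd (mem_nsmul_adjoinMulVar_zero.2 (hn a ha)) (hlt 0 one_pos)
    | l + 2 => exact absurd (mem_nsmul_adjoinMulVar_of_add_two hsq hmem) (hlt l (by lia))

theorem hasDegreeExcess_adjoinMulVar (hdeg : StrictMono deg) (hA : ∀ a ∈ A, deg a = p)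
    (hw : deg w = p) (hsq : 2 • w ∈ 2 • A) {s : Set ℕ}
    (hs : ∀ n, n + 1 ∈ s ↔ ∃ a ∈ n • A, a + w ∉ (n + 1) • A) :
    HasDegreeExcess (deg.coprod (.id ℕ)) (adjoinMulVar A w) p (s.indicator 1) := by
  intro n hn
  obtain ⟨n, rfl⟩ := Nat.exists_eq_add_of_le' hn
  rw [minimalDegrees_nsmul_adjoinMulVar hA hw]
  refine Monotone.map_isGreatest (fun _ _ h ↦ Nat.add_le_add_left h _) ?_
  by_cases hns : n + 1 ∈ s
  · rw [Set.indicator_of_mem hns]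
    exact isGreatest_minimalDegrees_snd_of_exists hdeg hA hw hsq ((hs n).1 hns)
  · rw [Set.indicator_of_notMem hns]
    have hall : ∀ a ∈ n • A, a + w ∈ (n + 1) • A := by simpa using mt (hs n).2 hns
    exact isGreatest_minimalDegrees_snd_of_forall hdeg hA hw hsq hall

end AdjoinMulVar

section Bivariate

/-- The degree of the exponent of a monomial in two variables. -/
def bivariateDegree : ℕ × ℕ →+ ℕ :=
  (AddMonoidHom.id ℕ).coprod (.id ℕ)

theorem bivariateDegree_apply (v : ℕ × ℕ) : bivariateDegree v = v.1 + v.2 := rfl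

theorem strictMono_bivariateDegree : StrictMono bivariateDegree := fun v w h ↦ by
  simp only [bivariateDegree_apply]
  rcases Prod.lt_iff.1 h with h | h <;> lia

/-- The exponents of the generators of the ideal `(x^q, y^q)(x, y)`. -/
def mulPowExponents (q : ℕ) : Set (ℕ × ℕ) :=
  {(q, 0), (0, q)} + {(1, 0), (0, 1)}

theorem bivariateDegree_of_mem_mulPowExponents {q : ℕ} {a : ℕ × ℕ} (ha : a ∈ mulPowExponents q) :
    bivariateDegree a = q + 1 := by
  obtain ⟨u, rfl | rfl, v, rfl | rfl, rfl⟩ := ha <;> simp [bivariateDegree_apply, add_comm]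

theorem mem_nsmul_mulPowExponents {q n : ℕ} {v : ℕ × ℕ} :
    v ∈ n • mulPowExponents q ↔
      ∃ i j r t, i + j = n ∧ r + t = n ∧ i * q + r = v.1 ∧ j * q + t = v.2 := by
  simp only [mulPowExponents, nsmul_add, Set.mem_add, mem_nsmul_pair]
  constructor
  · rintro ⟨_, ⟨i, j, hij, rfl⟩, _, ⟨r, t, hrt, rfl⟩, rfl⟩
    exact ⟨i, j, r, t, hij, hrt, by simp, by simp⟩
  · rintro ⟨i, j, r, t, hij, hrt, h₁, h₂⟩
    exact ⟨_, ⟨i, j, hij, rfl⟩, _, ⟨r, t, hrt, rfl⟩, Prod.ext (by simpa) (by simpa)⟩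

theorem exists_add_notMem_nsmul_mulPowExponents {k n : ℕ} (hn : n + 1 < k) :
    ∃ a ∈ n • mulPowExponents (k + 1),
      a + (k / 2 + 1, k + 1 - k / 2) ∉ (n + 1) • mulPowExponents (k + 1) := by
  -- The `x`-exponent of the product is `max (k / 2 + 1) (n + 2)`, in the gap between `n + 1` and
  -- `k + 1` of the `x`-exponents of the `(n + 1)`-st power.
  obtain ⟨b, hb⟩ : ∃ b, b + (k / 2 + 1) = max (k / 2 + 1) (n + 2) :=
    ⟨_, Nat.sub_add_cancel (le_max_left _ _)⟩
  refine ⟨(b, n * (k + 1) + (n - b)),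
    mem_nsmul_mulPowExponents.2 ⟨0, n, b, n - b, by lia, by lia, by simp, rfl⟩, fun h ↦ ?_⟩
  obtain ⟨i, j, r, t, hij, hrt, hx, -⟩ := mem_nsmul_mulPowExponents.1 h
  simp only [Prod.fst_add] at hx
  rcases i with _ | i
  · lia
  · have : k + 1 ≤ (i + 1) * (k + 1) := Nat.le_mul_of_pos_left _ i.succ_pos
    lia

theorem add_mem_nsmul_mulPowExponents {k n : ℕ} (hn : k ≤ n + 1) {a : ℕ × ℕ}
    (ha : a ∈ n • mulPowExponents (k + 1)) :
    a + (k / 2 + 1, k + 1 - k / 2) ∈ (n + 1) • mulPowExponents (k + 1) := by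
  obtain ⟨i, j, r, t, hij, hrt, hx, hy⟩ := mem_nsmul_mulPowExponents.1 ha
  rw [mem_nsmul_mulPowExponents, Prod.fst_add, Prod.snd_add, ← hx, ← hy]
  -- The exponent `r + (k / 2 + 1)` either stays within `n + 1` or is at least `k + 1`, and then
  -- one factor `x ^ (k + 1)` can be split off.
  by_cases hr : r + (k / 2 + 1) ≤ n + 1
  · exact ⟨i, j + 1, r + (k / 2 + 1), n + 1 - (r + (k / 2 + 1)),
      by lia, by lia, by lia, by lia⟩
  · exact ⟨i + 1, j, r + (k / 2 + 1) - (k + 1), n + 1 - (r + (k / 2 + 1) - (k + 1)),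
      by lia, by lia, by lia, by lia⟩

theorem hasDegreeExcess_indicator_Iio (k : ℕ) :
    HasDegreeExcess (bivariateDegree.coprod (.id ℕ))
      (adjoinMulVar (mulPowExponents (k + 1)) (k / 2 + 1, k + 1 - k / 2)) (k + 2)
      ((Set.Iio k).indicator 1) := by
  refine hasDegreeExcess_adjoinMulVar strictMono_bivariateDegree
    (fun a ↦ bivariateDegree_of_mem_mulPowExponents) ?_ ?_ fun n ↦ ⟨fun hn ↦ ?_, fun hn ↦ ?_⟩
  · rw [bivariateDegree_apply]
    lia
  · refine mem_nsmul_mulPowExponents.2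
      ⟨1, 1, 2 * (k / 2 + 1) - (k + 1), 2 - (2 * (k / 2 + 1) - (k + 1)), rfl, by lia, ?_, ?_⟩ <;>
      simp only [Prod.smul_mk, smul_eq_mul] <;> lia
  · exact exists_add_notMem_nsmul_mulPowExponents hn
  · obtain ⟨a, ha, haw⟩ := hn
    exact not_le.1 fun hk ↦ haw (add_mem_nsmul_mulPowExponents hk ha)

theorem even_fst_of_mem_nsmul_pair {n : ℕ} {v : ℕ × ℕ}
    (hv : v ∈ n • ({(2, 0), (0, 2)} : Set (ℕ × ℕ))) : Even v.1 := by
  obtain ⟨i, j, -, rfl⟩ := mem_nsmul_pair.1 hv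
  simp

theorem hasDegreeExcess_indicator_univ :
    HasDegreeExcess (bivariateDegree.coprod (.id ℕ)) (adjoinMulVar {(2, 0), (0, 2)} (1, 1)) 2
      (Set.univ.indicator 1) := by
  refine hasDegreeExcess_adjoinMulVar strictMono_bivariateDegree ?_ rfl
    (mem_nsmul_pair.2 ⟨1, 1, rfl, rfl⟩) fun n ↦ iff_of_true trivial ?_
  · rintro a (rfl | rfl) <;> rfl
  · have hmem := Set.nsmul_mem_nsmul (n := n) (Set.mem_insert (2, 0) {((0 : ℕ), (2 : ℕ))})
    refine ⟨_, hmem, fun h ↦ ?_⟩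
    have heven := even_fst_of_mem_nsmul_pair h
    simp [Nat.even_add_one] at heven

theorem exists_hasDegreeExcess_indicator {s : Set ℕ} (hs : IsLowerSet s) :
    ∃ (S : Set ((ℕ × ℕ) × ℕ)) (p : ℕ), 0 < p ∧
      HasDegreeExcess (bivariateDegree.coprod (.id ℕ)) S p (s.indicator 1) := by
  obtain rfl | ⟨k, rfl⟩ := hs.eq_univ_or_Iio
  · exact ⟨_, 2, two_pos, hasDegreeExcess_indicator_univ⟩
  · exact ⟨_, k + 2, k.succ.succ_pos, hasDegreeExcess_indicator_Iio k⟩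

end Bivariate

section Assembly

/-- Exponents in the variables `σ` as families of exponents in three variables: `τ (i, 0)`,
`τ (i, 1)` and `τ (i, 2)` are the variables of the `i`-th member. It identifies products of ideals
in disjoint sets of variables with products of sets of exponents. -/
noncomputable def piExponentEquiv {ι σ : Type*} [Finite σ] (τ : ι × Fin 3 ≃ σ) :
    (ι → (ℕ × ℕ) × ℕ) ≃+o (σ →₀ ℕ) where
  toFun v := Finsupp.equivFunOnFinite.symm fun a ↦
    ![(v (τ.symm a).1).1.1, (v (τ.symm a).1).1.2, (v (τ.symm a).1).2] (τ.symm a).2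
  invFun α i := ((α (τ (i, 0)), α (τ (i, 1))), α (τ (i, 2)))
  left_inv v := by simp
  right_inv α := by
    ext a
    obtain ⟨⟨i, j⟩, rfl⟩ := τ.surjective a
    fin_cases j <;> simp
  map_add' v w := by
    ext a
    obtain ⟨⟨i, j⟩, rfl⟩ := τ.surjective a
    fin_cases j <;> simp
  map_le_map_iff' {v w} := by
    rw [Finsupp.le_def, ← τ.forall_congr_right]
    simp [Fin.forall_fin_succ, Pi.le_def, Prod.le_def, and_assoc]

theorem degree_piExponentEquiv {ι σ : Type*} [Fintype ι] [Finite σ] (τ : ι × Fin 3 ≃ σ)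
    (v : ι → (ℕ × ℕ) × ℕ) :
    (piExponentEquiv τ v).degree = ∑ i, bivariateDegree.coprod (.id ℕ) (v i) := by
  cases nonempty_fintype σ
  rw [Finsupp.degree_eq_sum, ← τ.sum_comp, Fintype.sum_prod_type]
  simp [piExponentEquiv, Fin.sum_univ_three, bivariateDegree_apply]

theorem sum_indicator_lt_apply {f : ℕ → ℕ} {N n : ℕ} (hn : f n ≤ N) :
    ∑ j : Fin N, ({m | (j : ℕ) < f m} : Set ℕ).indicator (1 : ℕ → ℕ) n = f n := by
  simp [Set.indicator_apply, Fin.card_filter_val_lt, hn]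

theorem exists_hasDegreeExcess {f : ℕ → ℕ} (hf : Antitone f) :
    ∃ (r : ℕ) (S : Set (Fin r →₀ ℕ)) (p : ℕ), 0 < p ∧ HasDegreeExcess Finsupp.degree S p f := by
  have hlower (j : ℕ) : IsLowerSet {m | j < f m} := fun a b hba ha ↦ ha.trans_le (hf hba)
  choose S p hp hS using fun j ↦ exists_hasDegreeExcess_indicator (hlower j)
  -- `f 0` factors realise `f`; one more, of excess `0`, keeps `p` positive when `f = 0`.
  have hprod := HasDegreeExcess.univ_pi fun j : Fin (f 0 + 1) ↦ hS j
  simp only [sum_indicator_lt_apply ((hf (Nat.zero_le _)).trans (Nat.le_succ _))] at hprod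
  exact ⟨_, _, _, sum_pos (fun (j : Fin _) _ ↦ hp j) univ_nonempty,
    hprod.image (piExponentEquiv finProdFinEquiv) (degree_piExponentEquiv _)⟩

end Assembly

theorem exists_forall_ge_eq_of_antitone {f : ℕ → ℕ} (hf : Antitone f) :
    ∃ c N, ∀ n ≥ N, f n = c := by
  obtain ⟨N, hN⟩ := WellFoundedGT.monotone_chain_condition (α := ℕᵒᵈ) ⟨_, hf.dual_right⟩
  exact ⟨f N, N, fun n hn ↦ (hN n hn).symm⟩

theorem antitone_function_is_degree_excess_general (K : Type*) [Field K] (f : ℕ → ℕ)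
    (hf : Antitone f) :
    ∃ (s : ℕ) (I : Ideal (MvPolynomial (Fin s) K)),
      IsMonomialIdeal I ∧ I ≠ ⊥ ∧ I ≠ ⊤ ∧
      ∃ p : ℕ, (∃ c N : ℕ, ∀ n ≥ N, maxGenDeg (I ^ n) = p * n + c) ∧
        ∀ n : ℕ, 1 ≤ n → maxGenDeg (I ^ n) = p * n + f n := by
  obtain ⟨s, S, p, hp, hS⟩ := exists_hasDegreeExcess hf
  obtain ⟨c, N, hN⟩ := exists_forall_ge_eq_of_antitone hf
  have hpow (n : ℕ) (hn : 1 ≤ n) : maxGenDeg (monomialIdeal K S ^ n) = p * n + f n :=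
    hS.maxGenDeg_pow K hn
  have hpos : 0 < maxGenDeg (monomialIdeal K S) := by
    have := hpow 1 le_rfl
    rw [pow_one] at this
    lia
  refine ⟨s, monomialIdeal K S, ⟨S, rfl⟩, ?_, ?_, p, ⟨c, N + 1, fun n hn ↦ ?_⟩, hpow⟩
  · exact fun h ↦ hpos.ne' (h ▸ maxGenDeg_bot K)
  · exact fun h ↦ hpos.ne' (h ▸ maxGenDeg_top K)
  · rw [hpow n (by lia), hN n (by lia)]

/-- every non-increasing function `f : ℕ → ℕ` is the degree excess
function of a monomial ideal: there are a field `K`, a polynomial ring and a monomial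
ideal `I` with `d(I^n) = p·n + f(n)` for all `n ≥ 1`, where `p` is the Kodiyalam
invariant (the leading coefficient of the eventually linear function `d(I^n)`). -/
theorem antitone_function_is_degree_excess (f : ℕ → ℕ) (hf : Antitone f) :
    ∃ (K : Type) (_ : Field K) (s : ℕ) (I : Ideal (MvPolynomial (Fin s) K)),
      IsMonomialIdeal I ∧ I ≠ ⊥ ∧ I ≠ ⊤ ∧
      ∃ p : ℕ, (∃ c N : ℕ, ∀ n ≥ N, maxGenDeg (I ^ n) = p * n + c) ∧
        ∀ n : ℕ, 1 ≤ n → maxGenDeg (I ^ n) = p * n + f n :=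
  ⟨ℚ, inferInstance, antitone_function_is_degree_excess_general ℚ f hf⟩
end

section
/- Let I be a monomial ideal of K[X_1,...,X_s], δ(I) the maximal ℓ¹-norm of a vertex of the Newton polyhedron of I, and q the number of minimal generators of I of degree greater than δ(I). Then p(I) = δ(I), the reduction number r(I) satisfies r(I) ≤ q·s^{s/2}·δ(I)^s − q, and ε(I;n) ≤ q·(s^{s/2}δ(I)^s − 1)·(d(I) − δ(I)) for all n ≥ 1. -/
open MvPolynomial

/-- The Newton polyhedron `NP(I) = conv(E(I))` of a monomial ideal. -/
def newtonPolyhedron {K : Type*} [Field K] (s : ℕ)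
    (I : Ideal (MvPolynomial (Fin s) K)) : Set (Fin s → ℝ) :=
  convexHull ℝ {x | ∃ α : Fin s →₀ ℕ, monomial α (1 : K) ∈ I ∧ x = fun i => (α i : ℝ)}

/-!
Every exponent of `I` lies above one of finitely many minimal ones. If `V` is a smallest set of
these such that every point of the Newton polyhedron lies above a point of `conv V`, then `V`
consists of vertices.

*Lower bound.* If `β` is a vertex, then no element of `E(I ^ n)` lies strictly below `nβ`, so `nβ`
is the exponent of a minimal generator of `I ^ n` and `n|β| ≤ d(I ^ n)`.

*Reduction.* Let `J = (I_{≤ δ})` and let `x^α` be a generator of `I`. Write `α` as a nonnegative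
combination of elements of `V` and unit vectors in which the coefficients of `V` have sum at least
`1`. A basic solution has coefficients whose common denominator `D` is an `s × s` minor, hence at
most `δ ^ s` because each row has `ℓ¹`-norm at most `δ`; this is sharper than the bound
`s^{s/2} δ^s` given by Hadamard's inequality. Clearing denominators gives `x^{Dα} ∈ J ^ D`. By
pigeonhole, any product of more than `q(δ ^ s - 1)` generators outside `J` can be rewritten with a
factor in `J`, so that `I ^ (n + 1) = J I ^ n` for `n ≥ q(δ ^ s - 1)`. From then on
`d(I ^ (n + 1)) ≤ δ + d(I ^ n)`.
-/

section BasicSolution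

variable {ι 𝕜 E : Type*} [Field 𝕜]

theorem exists_support_subset_of_not_linearIndepOn [Fintype ι] [AddCommGroup E] [Module 𝕜 E]
    {a : ι → E} {t : Set ι} (h : ¬ LinearIndepOn 𝕜 a t) :
    ∃ d : ι → 𝕜, d ≠ 0 ∧ Function.support d ⊆ t ∧ ∑ i, d i • a i = 0 := by
  simp only [linearIndepOn_iff, not_forall] at h
  obtain ⟨d, hsupp, hsum, hd⟩ := h
  refine ⟨d, by simpa using hd, by simpa [Finsupp.mem_supported] using hsupp, ?_⟩
  rwa [Finsupp.linearCombination_apply, Finsupp.sum_fintype _ _ (by simp)] at hsum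

variable [LinearOrder 𝕜]

theorem exists_neg_of_sum_smul_eq_zero [Fintype ι] [AddCommGroup E] [PartialOrder E]
    [IsOrderedAddMonoid E] [Module 𝕜 E] [PosSMulMono 𝕜 E] {a : ι → E} (ha : ∀ i, 0 < a i)
    {d : ι → 𝕜} (hd : ∑ i, d i • a i = 0) (hd0 : d ≠ 0) : ∃ i, d i < 0 := by
  by_contra! hnonneg
  refine hd0 (funext fun i => ?_)
  have hterm := (Finset.sum_eq_zero_iff_of_nonneg
    fun i _ => smul_nonneg (hnonneg i) (ha i).le).mp hd i (Finset.mem_univ i)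
  exact (smul_eq_zero.mp hterm).resolve_right (ha i).ne'

variable [IsStrictOrderedRing 𝕜]

-- The ratio test of the simplex method.
theorem exists_nonneg_add_smul_apply_eq_zero [Finite ι] {c d : ι → 𝕜} (hc : 0 ≤ c)
    (hd : ∃ i, d i < 0) :
    ∃ t : 𝕜, 0 ≤ t ∧ 0 ≤ c + t • d ∧ ∃ k, d k < 0 ∧ (c + t • d) k = 0 := by
  cases nonempty_fintype ι
  obtain ⟨k, hk, hmin⟩ := Finset.exists_min_image {i | d i < 0} (fun i => c i / -d i)
    (by simpa only [Finset.Nonempty, Finset.mem_filter_univ] using hd)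
  simp only [Finset.mem_filter_univ] at hk hmin
  have ht : 0 ≤ c k / -d k := div_nonneg (hc k) (neg_nonneg.mpr hk.le)
  refine ⟨c k / -d k, ht, fun i => ?_, k, hk, ?_⟩
  · simp only [Pi.zero_apply, Pi.add_apply, Pi.smul_apply, smul_eq_mul]
    rcases lt_or_ge (d i) 0 with hi | hi
    · have := (le_div_iff₀ (neg_pos.mpr hi)).mp (hmin i hi)
      linarith
    · exact add_nonneg (hc i) (mul_nonneg ht hi)
  · simp only [Pi.add_apply, Pi.smul_apply, smul_eq_mul]
    field_simp [hk.ne]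
    ring

-- Moving along a linear dependence of the support in a direction that does not decrease `f`,
-- the ratio test makes a coefficient vanish; hence a solution of minimal support is basic.
theorem exists_nonneg_linearIndepOn_support [Fintype ι] [AddCommGroup E] [PartialOrder E]
    [IsOrderedAddMonoid E] [Module 𝕜 E] [PosSMulMono 𝕜 E] {a : ι → E} (ha : ∀ i, 0 < a i)
    (f : (ι → 𝕜) →ₗ[𝕜] 𝕜) {c : ι → 𝕜} (hc : 0 ≤ c) :
    ∃ b : ι → 𝕜, 0 ≤ b ∧ ∑ i, b i • a i = ∑ i, c i • a i ∧ f c ≤ f b ∧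
      LinearIndepOn 𝕜 a (Function.support b) := by
  obtain ⟨b, ⟨hb, hba, hfb⟩, hmin⟩ := exists_minimalFor_of_wellFoundedLT
    (fun b : ι → 𝕜 => 0 ≤ b ∧ ∑ i, b i • a i = ∑ i, c i • a i ∧ f c ≤ f b)
    Function.support ⟨c, hc, rfl, le_rfl⟩
  refine ⟨b, hb, hba, hfb, ?_⟩
  by_contra hdep
  obtain ⟨d, hd0, hsupp, hda, hfd⟩ : ∃ d : ι → 𝕜, d ≠ 0 ∧ Function.support d ⊆ Function.support b ∧
      ∑ i, d i • a i = 0 ∧ 0 ≤ f d := by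
    obtain ⟨d, hd0, hsupp, hda⟩ := exists_support_subset_of_not_linearIndepOn hdep
    rcases le_total 0 (f d) with hfd | hfd
    · exact ⟨d, hd0, hsupp, hda, hfd⟩
    · exact ⟨-d, neg_ne_zero.mpr hd0, by rwa [Function.support_neg], by simpa using hda,
        by simpa using hfd⟩
  obtain ⟨t, ht, hnonneg, k, hk, hzero⟩ :=
    exists_nonneg_add_smul_apply_eq_zero hb (exists_neg_of_sum_smul_eq_zero ha hda hd0)
  have hsub : Function.support (b + t • d) ⊆ Function.support b := fun i hi hbi =>
    hi (by simp [hbi, Function.notMem_support.mp (Set.notMem_subset hsupp (by simpa using hbi))])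
  have hle := hmin ⟨hnonneg, ?_, ?_⟩ hsub
  · exact hle (hsupp hk.ne) hzero
  · simp only [Pi.add_apply, Pi.smul_apply, smul_assoc, add_smul, Finset.sum_add_distrib,
      ← Finset.smul_sum, hda, smul_zero, add_zero, hba]
  · rw [map_add, map_smul, smul_eq_mul]
    exact hfb.trans (le_add_of_nonneg_right (mul_nonneg ht hfd))

end BasicSolution

theorem exists_linearIndependent_comp_of_span_eq_top {ι κ 𝕜 E : Type*} [DivisionRing 𝕜]
    [AddCommGroup E] [Module 𝕜 E] (b : Module.Basis κ 𝕜 E) {v : ι → E} {t : Set ι}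
    (ht : LinearIndepOn 𝕜 v t) (hv : Submodule.span 𝕜 (Set.range v) = ⊤) :
    ∃ e : κ → ι, LinearIndependent 𝕜 (v ∘ e) ∧ t ⊆ Set.range e := by
  obtain ⟨u, -, htu, hspan, hu⟩ := exists_linearIndepOn_extension ht (Set.subset_univ _)
  have htop : ⊤ ≤ Submodule.span 𝕜 (Set.range fun i : u => v i) := by
    rw [← hv, Submodule.span_le, ← Set.image_univ, ← Set.image_eq_range]
    exact hspan
  let e : κ ≃ u := b.indexEquiv (Module.Basis.mk hu htop)
  refine ⟨fun k => e k, hu.comp e e.injective, fun i hi => ⟨e.symm ⟨i, htu hi⟩, by simp⟩⟩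

section Determinant

open Matrix

variable {n R S : Type*} [Fintype n] [DecidableEq n] [CommRing R] [CommRing S]

theorem abv_det_le_prod_sum [Nontrivial R] [LinearOrder S] [IsStrictOrderedRing S]
    (abv : AbsoluteValue R S) (A : Matrix n n R) : abv A.det ≤ ∏ i, ∑ j, abv (A i j) :=
  calc abv A.det
      = abv (∑ τ : Equiv.Perm n, Equiv.Perm.sign τ • ∏ i, A i (τ i)) := by
        rw [← Matrix.det_transpose, Matrix.det_apply]; rfl
    _ ≤ ∑ τ : Equiv.Perm n, abv (Equiv.Perm.sign τ • ∏ i, A i (τ i)) := abv.sum_le _ _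
    _ = ∑ τ : Equiv.Perm n, ∏ i, abv (A i (τ i)) := by
        simp only [abv.map_units_int_smul, abv.map_prod]
    _ = ∑ f ∈ Finset.univ.map ⟨fun τ : Equiv.Perm n => (τ : n → n), DFunLike.coe_injective⟩,
          ∏ i, abv (A i (f i)) := by rw [Finset.sum_map]; rfl
    _ ≤ ∑ f : n → n, ∏ i, abv (A i (f i)) :=
        Finset.sum_le_sum_of_subset_of_nonneg (Finset.subset_univ _)
          fun _ _ _ => Finset.prod_nonneg fun _ _ => abv.nonneg _
    _ = ∏ i, ∑ j, abv (A i j) := by rw [Finset.prod_univ_sum, Fintype.piFinset_univ]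

theorem map_det_smul_eq_comp_vecMul_adjugate (φ : R →+* S) (A : Matrix n n R) {c : n → S}
    {x : n → R} (h : c ᵥ* φ.mapMatrix A = φ ∘ x) : φ A.det • c = φ ∘ (x ᵥ* A.adjugate) :=
  calc φ A.det • c = c ᵥ* (φ.mapMatrix A * (φ.mapMatrix A).adjugate) := by
        rw [mul_adjugate, vecMul_smul, vecMul_one, φ.map_det]
    _ = (φ ∘ x) ᵥ* φ.mapMatrix A.adjugate := by rw [← vecMul_vecMul, h, φ.map_adjugate]
    _ = φ ∘ (x ᵥ* A.adjugate) := by ext; simp [vecMul, dotProduct]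

end Determinant

section IntegralCombination

variable {σ : Type*}

/-- The inclusion `ℕ^σ ⊆ ℝ^σ`, which places exponent vectors in the space of the Newton
polyhedron. -/
def realVec : (σ →₀ ℕ) →+ (σ → ℝ) where
  toFun α i := α i
  map_zero' := by ext; simp
  map_add' α β := by ext; simp

@[simp]
theorem realVec_apply (α : σ →₀ ℕ) (i : σ) : realVec α i = α i := rfl

theorem realVec_injective : Function.Injective (realVec (σ := σ)) :=
  fun _ _ h => Finsupp.ext fun i => Nat.cast_injective (congrFun h i)

theorem realVec_le_realVec {α β : σ →₀ ℕ} : realVec α ≤ realVec β ↔ α ≤ β :=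
  ⟨fun h i => Nat.cast_le.mp (h i), fun h i => Nat.cast_le.mpr (h i)⟩

theorem realVec_pos {α : σ →₀ ℕ} (hα : α ≠ 0) : 0 < realVec α :=
  lt_of_le_of_ne (fun _ => Nat.cast_nonneg _) fun h =>
    hα (realVec_injective (by rw [← h, map_zero]))

variable [Fintype σ]

theorem sum_smul_realVec_single_one (x : σ → ℝ) :
    ∑ i, x i • realVec (Finsupp.single i 1) = x := by
  classical
  ext j
  simp [Finsupp.single_apply]

-- By Cramer's rule `D` can be taken to be the absolute value of a maximal minor of the matrix
-- with rows `a i`.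
theorem exists_nat_mul_eq_of_linearIndepOn {ι : Type*} [Fintype ι] {a : ι → σ →₀ ℕ} {δ : ℕ}
    (hδ : ∀ i, (a i).degree ≤ δ) (hspan : Submodule.span ℝ (Set.range (realVec ∘ a)) = ⊤)
    {c : ι → ℝ} (hc : 0 ≤ c) (hli : LinearIndepOn ℝ (realVec ∘ a) (Function.support c))
    {x : σ →₀ ℕ} (hx : ∑ i, c i • realVec (a i) = realVec x) :
    ∃ D : ℕ, 0 < D ∧ D ≤ δ ^ Fintype.card σ ∧ ∀ i, ∃ m : ℕ, D * c i = m := by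
  classical
  obtain ⟨e, he, hsupp⟩ :=
    exists_linearIndependent_comp_of_span_eq_top (Pi.basisFun ℝ σ) hli hspan
  let A : Matrix σ σ ℤ := Matrix.of fun k j => (a (e k) j : ℤ)
  have hrow : ((Int.castRingHom ℝ).mapMatrix A).row = (realVec ∘ a) ∘ e := by
    ext k j
    simp [A, Matrix.row]
  have hdet : A.det ≠ 0 := by
    rw [← hrow, Matrix.linearIndependent_rows_iff_isUnit, Matrix.isUnit_iff_isUnit_det,
      ← RingHom.map_det] at he
    exact fun h => he.ne_zero (by rw [h, map_zero])
  have hvec : Matrix.vecMul (c ∘ e) ((Int.castRingHom ℝ).mapMatrix A) =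
      Int.castRingHom ℝ ∘ fun j => (x j : ℤ) := by
    have hsum : ∑ k, c (e k) • realVec (a (e k)) = ∑ i, c i • realVec (a i) :=
      Fintype.sum_of_injective e he.injective.of_comp _ _
        (fun i hi => by rw [Function.notMem_support.mp (Set.notMem_subset hsupp hi), zero_smul])
        fun _ => rfl
    ext j
    simpa [A, Matrix.vecMul, dotProduct] using congrFun (hsum.trans hx) j
  have hcramer := map_det_smul_eq_comp_vecMul_adjugate _ A hvec
  refine ⟨A.det.natAbs, Int.natAbs_pos.mpr hdet, ?_, fun i => ?_⟩
  · zify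
    calc |A.det| ≤ ∏ k, ∑ j, |A k j| := abv_det_le_prod_sum AbsoluteValue.abs A
      _ = ∏ k, ((a (e k)).degree : ℤ) := by simp [A, Finsupp.degree_eq_sum]
      _ ≤ ∏ _k : σ, (δ : ℤ) :=
          Finset.prod_le_prod (fun _ _ => Nat.cast_nonneg _) fun k _ => Nat.cast_le.mpr (hδ (e k))
      _ = (δ : ℤ) ^ Fintype.card σ := by rw [Finset.prod_const, Finset.card_univ]
  · by_cases hi : c i = 0
    · exact ⟨0, by simp [hi]⟩
    obtain ⟨k, rfl⟩ := hsupp hi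
    refine ⟨(Matrix.vecMul (fun j => (x j : ℤ)) A.adjugate k).natAbs, ?_⟩
    have hk : (A.det : ℝ) * c (e k) = _ := congrFun hcramer k
    rw [Nat.cast_natAbs, Nat.cast_natAbs, Int.cast_abs, Int.cast_abs, ← abs_of_nonneg (hc (e k)),
      ← abs_mul, hk]
    rfl

theorem exists_nat_combination {ι : Type*} [Fintype ι] {a : ι → σ →₀ ℕ} (ha : ∀ i, a i ≠ 0)
    {δ : ℕ} (hδ : ∀ i, (a i).degree ≤ δ)
    (hspan : Submodule.span ℝ (Set.range (realVec ∘ a)) = ⊤) (f : (ι → ℝ) →ₗ[ℝ] ℝ) {c : ι → ℝ}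
    (hc : 0 ≤ c) {x : σ →₀ ℕ} (hx : ∑ i, c i • realVec (a i) = realVec x) :
    ∃ D : ℕ, 0 < D ∧ D ≤ δ ^ Fintype.card σ ∧ ∃ m : ι → ℕ,
      ∑ i, m i • a i = D • x ∧ D * f c ≤ f (fun i => m i) := by
  obtain ⟨b, hb, hba, hfb, hli⟩ :=
    exists_nonneg_linearIndepOn_support (fun i => realVec_pos (ha i)) f hc
  obtain ⟨D, hD, hDδ, hm⟩ := exists_nat_mul_eq_of_linearIndepOn hδ hspan hb hli (hba.trans hx)
  choose m hm using hm
  have hmb : (fun i => (m i : ℝ)) = (D : ℝ) • b := funext fun i => (hm i).symm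
  refine ⟨D, hD, hDδ, m, realVec_injective ?_, ?_⟩
  · calc realVec (∑ i, m i • a i) = ∑ i, (m i : ℝ) • realVec (a i) := by
          simp only [map_sum, map_nsmul, Nat.cast_smul_eq_nsmul]
      _ = (D : ℝ) • ∑ i, b i • realVec (a i) := by
          simp only [← hm, mul_smul, Finset.smul_sum]
      _ = realVec (D • x) := by rw [hba, hx, map_nsmul, Nat.cast_smul_eq_nsmul]
  · rw [hmb, map_smul, smul_eq_mul]
    gcongr

theorem exists_weights_of_mem_convexHull_image {ι E : Type*} [AddCommGroup E] [Module ℝ E]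
    {V : Finset ι} {z : ι → E} (hz : Set.InjOn z V) {u : E} (hu : u ∈ convexHull ℝ (z '' V)) :
    ∃ w : V → ℝ, 0 ≤ w ∧ ∑ v, w v = 1 ∧ ∑ v, w v • z v = u := by
  classical
  rw [← Finset.coe_image, Finset.mem_convexHull'] at hu
  obtain ⟨w, hw0, hw1, hwu⟩ := hu
  rw [Finset.sum_image hz] at hw1 hwu
  refine ⟨fun v => w (z v), fun v => hw0 _ (Finset.mem_image_of_mem _ v.2), ?_, ?_⟩
  · rw [← hw1, ← Finset.sum_coe_sort V]
  · rw [← hwu, ← Finset.sum_coe_sort V]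

-- Apply `exists_nat_combination` to `g = ∑ λ_v v + ∑ (g - u)_i e_i` with objective `∑ λ_v`.
theorem exists_multiset_sum_le_nsmul {V : Finset (σ →₀ ℕ)} (hV : 0 ∉ V) {δ : ℕ} (hδ : 1 ≤ δ)
    (hVδ : ∀ v ∈ V, v.degree ≤ δ) {u : σ → ℝ} (hu : u ∈ convexHull ℝ (realVec '' V))
    {g : σ →₀ ℕ} (hug : u ≤ realVec g) :
    ∃ D : ℕ, 0 < D ∧ D ≤ δ ^ Fintype.card σ ∧ ∃ T : Multiset (σ →₀ ℕ),
      (∀ v ∈ T, v ∈ V) ∧ D ≤ T.card ∧ T.sum ≤ D • g := by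
  obtain ⟨w, hw0, hw1, hwu⟩ := exists_weights_of_mem_convexHull_image realVec_injective.injOn hu
  let a : V ⊕ σ → σ →₀ ℕ := Sum.elim (↑) fun i => Finsupp.single i 1
  let c : V ⊕ σ → ℝ := Sum.elim w (realVec g - u)
  let f : (V ⊕ σ → ℝ) →ₗ[ℝ] ℝ := ∑ v, LinearMap.proj (Sum.inl v)
  have hf (b : V ⊕ σ → ℝ) : f b = ∑ v, b (Sum.inl v) := by
    simp only [f, LinearMap.sum_apply, LinearMap.proj_apply]
  have ha : ∀ i, a i ≠ 0 := by
    rintro (v | i)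
    · exact ne_of_mem_of_not_mem v.2 hV
    · simp [a]
  have haδ : ∀ i, (a i).degree ≤ δ := by
    rintro (v | i)
    · exact hVδ v v.2
    · simpa [a] using hδ
  have hspan : Submodule.span ℝ (Set.range (realVec ∘ a)) = ⊤ := by
    refine eq_top_iff.mpr fun x _ => ?_
    refine sum_smul_realVec_single_one x ▸ Submodule.sum_mem _ fun i _ => ?_
    exact Submodule.smul_mem _ _ (Submodule.subset_span ⟨Sum.inr i, rfl⟩)
  have hc : 0 ≤ c := by
    rintro (v | i)
    · exact hw0 v
    · exact sub_nonneg.mpr (hug i)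
  have hcg : ∑ i, c i • realVec (a i) = realVec g := by
    simp only [Fintype.sum_sum_type, a, c, Sum.elim_inl, Sum.elim_inr, hwu,
      sum_smul_realVec_single_one, add_sub_cancel]
  obtain ⟨D, hD, hDδ, m, hma, hfm⟩ := exists_nat_combination ha haδ hspan f hc hcg
  refine ⟨D, hD, hDδ, ∑ v : V, Multiset.replicate (m (Sum.inl v)) v.1, ?_, ?_, ?_⟩
  · simp only [Multiset.mem_sum]
    rintro _ ⟨v, -, hv⟩
    exact Multiset.eq_of_mem_replicate hv ▸ v.2
  · have hc1 : ∑ v, c (Sum.inl v) = 1 := hw1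
    rw [hf, hf, hc1, mul_one] at hfm
    simp only [Multiset.card_sum, Multiset.card_replicate]
    exact_mod_cast hfm
  · rw [← hma, Fintype.sum_sum_type, ← Multiset.coe_sumAddMonoidHom, map_sum]
    simp only [Multiset.coe_sumAddMonoidHom, Multiset.sum_replicate]
    exact le_self_add

end IntegralCombination

section UpperConvexHull

variable {𝕜 E : Type*} [Field 𝕜] [LinearOrder 𝕜] [AddCommGroup E] [PartialOrder E] [Module 𝕜 E]
  {A T : Set E} {v x y : E}

theorem exists_add_smul_sub_le_of_mem_upperClosure [IsStrictOrderedRing 𝕜] (hT : T.Nonempty)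
    (hx : x ∈ upperClosure (convexHull 𝕜 (insert v T))) :
    ∃ a : 𝕜, 0 ≤ a ∧ ∃ u ∈ convexHull 𝕜 T, v + a • (u - v) ≤ x := by
  obtain ⟨w, hw, hwx⟩ := hx
  rw [convexHull_insert hT, mem_convexJoin] at hw
  obtain ⟨_, rfl, u, hu, hw⟩ := hw
  rw [segment_eq_image'] at hw
  obtain ⟨a, ha, rfl⟩ := hw
  exact ⟨a, ha.1, u, hu, hwx⟩

variable [IsOrderedAddMonoid E]

theorem convex_upperClosure [PosSMulMono 𝕜 E] (hT : Convex 𝕜 T) :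
    Convex 𝕜 (upperClosure T : Set E) := by
  rintro x ⟨u, hu, hux⟩ y ⟨u', hu', huy⟩ a b ha hb hab
  exact ⟨a • u + b • u', hT hu hu' ha hb hab,
    add_le_add (smul_le_smul_of_nonneg_left hux ha) (smul_le_smul_of_nonneg_left huy hb)⟩

variable [PosSMulStrictMono 𝕜 E]

theorem eq_of_mem_openSegment_of_le (hv : v ∈ openSegment 𝕜 x y) (hx : v ≤ x) (hy : v ≤ y) :
    x = v := by
  obtain ⟨a, b, ha, hb, hab, hxy⟩ := hv
  refine (hx.eq_or_lt.resolve_right fun hlt => ?_).symm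
  have := add_lt_add_of_lt_of_le (smul_lt_smul_of_pos_left hlt ha)
    (smul_le_smul_of_nonneg_left hy hb.le)
  rw [hxy, ← add_smul, hab, one_smul] at this
  exact this.false

variable [IsStrictOrderedRing 𝕜]

theorem mem_extremePoints_of_subset_upperClosure_insert
    (hA : A ⊆ upperClosure (convexHull 𝕜 (insert v T))) (hvA : v ∈ A)
    (hv : v ∉ upperClosure (convexHull 𝕜 T)) : v ∈ A.extremePoints 𝕜 := by
  refine mem_extremePoints_iff_left.mpr ⟨hvA, fun x hx y hy hvxy => ?_⟩
  rcases T.eq_empty_or_nonempty with rfl | hT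
  · simp only [insert_empty_eq, convexHull_singleton, upperClosure_singleton] at hA
    exact eq_of_mem_openSegment_of_le hvxy (hA hx) (hA hy)
  obtain ⟨a, ha, u, hu, hux⟩ := exists_add_smul_sub_le_of_mem_upperClosure hT (hA hx)
  obtain ⟨b, hb, u', hu', huy⟩ := exists_add_smul_sub_le_of_mem_upperClosure hT (hA hy)
  obtain ⟨p, r, hp, hr, hpr, hxy⟩ := id hvxy
  have hpa : 0 ≤ p * a := mul_nonneg hp.le ha
  have hrb : 0 ≤ r * b := mul_nonneg hr.le hb
  have hle : (p * a) • u + (r * b) • u' ≤ (p * a + r * b) • v := by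
    have hsum := add_le_add (smul_le_smul_of_nonneg_left hux hp.le)
      (smul_le_smul_of_nonneg_left huy hr.le)
    rw [hxy] at hsum
    have hexpand : p • (v + a • (u - v)) + r • (v + b • (u' - v)) =
        ((p * a) • u + (r * b) • u' - (p * a + r * b) • v) + (p + r) • v := by module
    rwa [hexpand, hpr, one_smul, add_le_iff_nonpos_left, sub_nonpos] at hsum
  rcases (add_nonneg hpa hrb).eq_or_lt' with h0 | hpos
  · obtain ⟨hpa0, hrb0⟩ := (add_eq_zero_iff_of_nonneg hpa hrb).mp h0
    obtain rfl := (mul_eq_zero_iff_left hp.ne').mp hpa0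
    obtain rfl := (mul_eq_zero_iff_left hr.ne').mp hrb0
    rw [zero_smul, add_zero] at hux huy
    exact eq_of_mem_openSegment_of_le hvxy hux huy
  · refine absurd ⟨_, convex_iff_div.mp (convex_convexHull 𝕜 T) hu hu' hpa hrb hpos, ?_⟩ hv
    calc (p * a / (p * a + r * b)) • u + (r * b / (p * a + r * b)) • u'
        = (p * a + r * b)⁻¹ • ((p * a) • u + (r * b) • u') := by module
      _ ≤ (p * a + r * b)⁻¹ • (p * a + r * b) • v :=
          smul_le_smul_of_nonneg_left hle (inv_nonneg.mpr hpos.le)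
      _ = v := inv_smul_smul₀ hpos.ne' v

-- A minimal subset of `P` with the covering property consists of extreme points.
theorem exists_subset_extremePoints_subset_upperClosure {P : Set E} (hP : P.Finite) (hPA : P ⊆ A)
    (hA : A ⊆ upperClosure (convexHull 𝕜 P)) :
    ∃ V ⊆ P, V ⊆ A.extremePoints 𝕜 ∧ A ⊆ upperClosure (convexHull 𝕜 V) := by
  obtain ⟨V, ⟨hVP, hAV⟩, hmin⟩ := (hP.finite_subsets.subset
    (Set.sep_subset _ fun V => A ⊆ upperClosure (convexHull 𝕜 V))).exists_minimal
      ⟨P, subset_refl P, hA⟩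
  refine ⟨V, hVP, fun v hv => ?_, hAV⟩
  have hins : insert v (V \ {v}) = V := by rw [Set.insert_sdiff_self_of_mem hv]
  refine mem_extremePoints_of_subset_upperClosure_insert (hins.symm ▸ hAV) (hPA (hVP hv))
    fun hmem => ?_
  have hV : V ⊆ upperClosure (convexHull 𝕜 (V \ {v})) := by
    rw [← hins, Set.insert_subset_iff, hins]
    exact ⟨hmem, (subset_convexHull 𝕜 _).trans subset_upperClosure⟩
  have hcover : A ⊆ upperClosure (convexHull 𝕜 (V \ {v})) := by
    refine hAV.trans (upperClosure_min ?_ (upperClosure _).upper)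
    exact convexHull_min hV (convex_upperClosure (convex_convexHull 𝕜 _))
  exact (hmin ⟨Set.sdiff_subset.trans hVP, hcover⟩ Set.sdiff_subset hv).2 rfl

end UpperConvexHull

section Exponents

variable {σ R : Type*} [CommSemiring R] {I J : Ideal (MvPolynomial σ R)} {α β : σ →₀ ℕ}

/-- The set of exponents of the monomials belonging to `I`. -/
def exponents (I : Ideal (MvPolynomial σ R)) : Set (σ →₀ ℕ) :=
  {α | monomial α (1 : R) ∈ I}

theorem exponents_mono (h : I ≤ J) : exponents I ⊆ exponents J :=
  fun _ hα => h hα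

theorem add_mem_exponents_mul (hα : α ∈ exponents I) (hβ : β ∈ exponents J) :
    α + β ∈ exponents (I * J) := by
  have := Ideal.mul_mem_mul hα hβ
  rwa [monomial_mul, one_mul] at this

theorem isUpperSet_exponents (I : Ideal (MvPolynomial σ R)) : IsUpperSet (exponents I) := by
  intro α β hαβ hα
  obtain ⟨γ, rfl⟩ := exists_add_of_le hαβ
  have := I.mul_mem_right (monomial γ 1) hα
  rwa [monomial_mul, one_mul] at this

theorem zero_mem_exponents : 0 ∈ exponents I ↔ I = ⊤ :=
  I.eq_top_iff_one.symm

theorem sum_mem_exponents_pow {T : Multiset (σ →₀ ℕ)} (hT : ∀ α ∈ T, α ∈ exponents I) :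
    T.sum ∈ exponents (I ^ T.card) := by
  induction T using Multiset.induction_on with
  | empty => rw [Multiset.sum_zero, Multiset.card_zero, zero_mem_exponents, pow_zero,
      Ideal.one_eq_top]
  | cons α T ih =>
    rw [Multiset.sum_cons, Multiset.card_cons, pow_succ']
    exact add_mem_exponents_mul (hT α (Multiset.mem_cons_self α T))
      (ih fun β hβ => hT β (Multiset.mem_cons_of_mem hβ))

theorem nsmul_mem_exponents_pow (hα : α ∈ exponents I) (n : ℕ) : n • α ∈ exponents (I ^ n) := by
  simpa using sum_mem_exponents_pow (T := Multiset.replicate n α)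
    fun β hβ => Multiset.eq_of_mem_replicate hβ ▸ hα

theorem mem_exponents_span [Nontrivial R] {S : Set (σ →₀ ℕ)} :
    α ∈ exponents (Ideal.span ((fun β => monomial β (1 : R)) '' S)) ↔ ∃ β ∈ S, β ≤ α := by
  classical
  rw [exponents, Set.mem_ofPred_eq, mem_ideal_span_monomial_image]
  simp [support_monomial]

theorem finite_setOf_minimal_mem_exponents [Finite σ]
    (I : Ideal (MvPolynomial σ R)) :
    {α | Minimal (· ∈ exponents I) α}.Finite :=
  WellQuasiOrderedLE.finite_of_isAntichain (setOfPred_minimal_antichain _)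

end Exponents

section MonomialIdeal

open scoped Pointwise

variable {σ K : Type*} [Field K] {I J : Ideal (MvPolynomial σ K)}

namespace IsMonomialIdeal

theorem span_exponents (hI : IsMonomialIdeal I) :
    Ideal.span ((fun α => monomial α (1 : K)) '' exponents I) = I := by
  obtain ⟨S, rfl⟩ := hI
  refine le_antisymm (Ideal.span_le.mpr (Set.image_subset_iff.mpr fun _ hα => hα)) ?_
  exact Ideal.span_mono (Set.image_mono fun α hα => Ideal.subset_span (Set.mem_image_of_mem _ hα))

theorem le_of_exponents_subset (hI : IsMonomialIdeal I) (h : exponents I ⊆ exponents J) :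
    I ≤ J := by
  rw [← hI.span_exponents, Ideal.span_le]
  exact Set.image_subset_iff.mpr h

theorem mem_exponents_of_mem_support (hI : IsMonomialIdeal I) {f : MvPolynomial σ K} (hf : f ∈ I)
    {α : σ →₀ ℕ} (hα : α ∈ f.support) : α ∈ exponents I := by
  rw [← hI.span_exponents, mem_ideal_span_monomial_image] at hf
  obtain ⟨β, hβ, hβα⟩ := hf α hα
  exact isUpperSet_exponents I hβα hβ

theorem mul_eq_span (hI : IsMonomialIdeal I) (hJ : IsMonomialIdeal J) :
    I * J = Ideal.span ((fun α => monomial α (1 : K)) '' (exponents I + exponents J)) := by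
  conv_lhs => rw [← hI.span_exponents, ← hJ.span_exponents, Ideal.span_mul_span']
  exact congrArg Ideal.span
    (Set.image_image2_distrib fun α β => by rw [monomial_mul, one_mul]).symm

theorem mul (hI : IsMonomialIdeal I) (hJ : IsMonomialIdeal J) : IsMonomialIdeal (I * J) :=
  ⟨_, hI.mul_eq_span hJ⟩

theorem one : IsMonomialIdeal (1 : Ideal (MvPolynomial σ K)) :=
  ⟨{0}, by rw [Set.image_singleton, monomial_zero', C_1, Ideal.span_singleton_one,
    Ideal.one_eq_top]⟩

theorem pow (hI : IsMonomialIdeal I) (n : ℕ) : IsMonomialIdeal (I ^ n) := by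
  induction n with
  | zero => exact pow_zero I ▸ one
  | succ n ih => exact pow_succ I n ▸ ih.mul hI

theorem exponents_mul (hI : IsMonomialIdeal I) (hJ : IsMonomialIdeal J) :
    exponents (I * J) = exponents I + exponents J := by
  ext γ
  rw [hI.mul_eq_span hJ, mem_exponents_span]
  constructor
  · rintro ⟨_, ⟨α, hα, β, hβ, rfl⟩, hγ⟩
    obtain ⟨ρ, rfl⟩ := exists_add_of_le hγ
    exact ⟨α, hα, β + ρ, isUpperSet_exponents J le_self_add hβ, (add_assoc α β ρ).symm⟩
  · exact fun hγ => ⟨γ, hγ, le_rfl⟩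

end IsMonomialIdeal

theorem span_range_X_eq :
    Ideal.span (Set.range X) = Ideal.span ((fun α => monomial α (1 : K)) ''
      Set.range fun i : σ => Finsupp.single i 1) := by
  rw [← Set.range_comp]
  rfl

theorem mem_exponents_span_range_X {α : σ →₀ ℕ} :
    α ∈ exponents (Ideal.span (Set.range (X : σ → MvPolynomial σ K))) ↔ α ≠ 0 := by
  rw [span_range_X_eq, mem_exponents_span, Set.exists_range_iff, Finsupp.ne_iff]
  simp [Finsupp.single_le_iff, Nat.one_le_iff_ne_zero]

namespace IsMonomialIdeal

theorem minimal_mem_exponents_iff (hI : IsMonomialIdeal I) {α : σ →₀ ℕ} :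
    Minimal (· ∈ exponents I) α ↔
      monomial α (1 : K) ∈ I ∧ monomial α (1 : K) ∉ Ideal.span (Set.range X) * I := by
  refine and_congr_right fun hα => ?_
  change _ ↔ α ∉ exponents (Ideal.span (Set.range X) * I)
  rw [exponents_mul ⟨_, span_range_X_eq⟩ hI]
  constructor
  · rintro hmin ⟨μ, hμ, β, hβ, rfl⟩
    exact mem_exponents_span_range_X.mp hμ (by simpa using hmin hβ le_add_self)
  · intro hnot β hβ hβα
    obtain ⟨μ, rfl⟩ := exists_add_of_le hβα
    by_contra hle
    refine hnot ⟨μ, mem_exponents_span_range_X.mpr ?_, β, hβ, add_comm μ β⟩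
    rintro rfl
    exact hle (add_zero β).le

theorem exists_minimal_sum_le (hI : IsMonomialIdeal I) {n : ℕ} {γ : σ →₀ ℕ}
    (hγ : γ ∈ exponents (I ^ n)) : ∃ T : Multiset (σ →₀ ℕ), T.card = n ∧
      (∀ α ∈ T, Minimal (· ∈ exponents I) α) ∧ T.sum ≤ γ := by
  induction n generalizing γ with
  | zero => exact ⟨0, rfl, by simp, zero_le⟩
  | succ n ih =>
    rw [pow_succ', hI.exponents_mul (hI.pow n)] at hγ
    obtain ⟨α, hα, β, hβ, rfl⟩ := hγ
    obtain ⟨T, rfl, hT, hTβ⟩ := ih hβ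
    obtain ⟨μ, hμα, hμ⟩ := exists_minimal_le_of_wellFoundedLT (· ∈ exponents I) α hα
    exact ⟨μ ::ₘ T, Multiset.card_cons μ T, Multiset.forall_mem_cons.mpr ⟨hμ, hT⟩,
      by simpa only [Multiset.sum_cons] using add_le_add hμα hTβ⟩

end IsMonomialIdeal

end MonomialIdeal

section Truncation

variable {σ R : Type*} [CommSemiring R] {I J : Ideal (MvPolynomial σ R)} {d e : ℕ}

/-- The ideal `(I_{≤ d})` generated by the elements of `I` of degree at most `d`; thus `I` is
generated in degrees at most `d` if and only if `I ≤ truncation I d`. -/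
noncomputable def truncation (I : Ideal (MvPolynomial σ R)) (d : ℕ) : Ideal (MvPolynomial σ R) :=
  Ideal.span {f | f ∈ I ∧ f.totalDegree ≤ d}

theorem truncation_le (I : Ideal (MvPolynomial σ R)) (d : ℕ) : truncation I d ≤ I :=
  Ideal.span_le.mpr fun _ hf => hf.1

theorem truncation_truncation_self (I : Ideal (MvPolynomial σ R)) (d : ℕ) :
    truncation (truncation I d) d = truncation I d :=
  (truncation_le _ d).antisymm <| Ideal.span_mono fun _ hf => ⟨Ideal.subset_span hf, hf.2⟩

theorem truncation_mul_truncation_le (I J : Ideal (MvPolynomial σ R)) (d e : ℕ) :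
    truncation I d * truncation J e ≤ truncation (I * J) (d + e) := by
  rw [truncation, truncation, Ideal.span_mul_span']
  refine Ideal.span_mono ?_
  rintro _ ⟨f, hf, g, hg, rfl⟩
  exact ⟨Ideal.mul_mem_mul hf.1 hg.1, (totalDegree_mul f g).trans (add_le_add hf.2 hg.2)⟩

theorem mem_exponents_truncation {α : σ →₀ ℕ} (hα : α ∈ exponents I) (hd : α.degree ≤ d) :
    α ∈ exponents (truncation I d) :=
  Ideal.subset_span ⟨hα, (totalDegree_monomial_le α 1).trans hd⟩

end Truncation

section MaxGenDeg

variable {σ K : Type*} [Field K] {I J : Ideal (MvPolynomial σ K)} {d : ℕ}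

theorem maxGenDeg_le_s14 (h : I ≤ truncation I d) : maxGenDeg I ≤ d :=
  Nat.sInf_le (h.antisymm (truncation_le I d))

theorem maxGenDeg_one : maxGenDeg (1 : Ideal (MvPolynomial σ K)) = 0 := by
  refine Nat.le_zero.mp (maxGenDeg_le_s14 ?_)
  rw [Ideal.one_eq_top, top_le_iff, Ideal.eq_top_iff_one]
  exact Ideal.subset_span ⟨trivial, totalDegree_one.le⟩

theorem maxGenDeg_truncation_le (I : Ideal (MvPolynomial σ K)) (d : ℕ) :
    maxGenDeg (truncation I d) ≤ d :=
  maxGenDeg_le_s14 (truncation_truncation_self I d).ge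

theorem truncation_maxGenDeg (hI : I.FG) : truncation I (maxGenDeg I) = I := by
  obtain ⟨S, hS⟩ := hI
  have hne : {d | I = truncation I d}.Nonempty := by
    refine ⟨S.sup totalDegree, le_antisymm ?_ (truncation_le I _)⟩
    conv_lhs => rw [← hS]
    exact Ideal.span_mono fun f hf => ⟨hS ▸ Ideal.subset_span hf, Finset.le_sup hf⟩
  exact (Nat.sInf_mem hne).symm

theorem maxGenDeg_mul_le (hI : I.FG) (hJ : J.FG) :
    maxGenDeg (I * J) ≤ maxGenDeg I + maxGenDeg J := by
  refine maxGenDeg_le_s14 ?_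
  conv_lhs => rw [← truncation_maxGenDeg hI, ← truncation_maxGenDeg hJ]
  exact truncation_mul_truncation_le I J _ _

theorem maxGenDeg_pow_le (hI : I.FG) (n : ℕ) : maxGenDeg (I ^ n) ≤ n * maxGenDeg I := by
  induction n with
  | zero => rw [pow_zero, maxGenDeg_one, Nat.zero_mul]
  | succ n ih =>
    rw [pow_succ, Nat.succ_mul]
    exact (maxGenDeg_mul_le hI.pow hI).trans (Nat.add_le_add_right ih _)

theorem IsMonomialIdeal.exists_degree_le_maxGenDeg (hI : IsMonomialIdeal I) (hfg : I.FG)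
    {γ : σ →₀ ℕ} (hγ : γ ∈ exponents I) : ∃ α ∈ exponents I, α.degree ≤ maxGenDeg I ∧ α ≤ γ := by
  have hle : truncation I (maxGenDeg I) ≤ Ideal.span ((fun α => monomial α (1 : K)) ''
      {α | α ∈ exponents I ∧ α.degree ≤ maxGenDeg I}) := by
    refine Ideal.span_le.mpr fun f hf => mem_ideal_span_monomial_image.mpr fun α hα => ?_
    exact ⟨α, ⟨hI.mem_exponents_of_mem_support hf.1 hα, (le_totalDegree hα).trans hf.2⟩, le_rfl⟩
  rw [truncation_maxGenDeg hfg] at hle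
  obtain ⟨α, ⟨hα, hdeg⟩, hαγ⟩ := mem_exponents_span.mp (exponents_mono hle hγ)
  exact ⟨α, hα, hdeg, hαγ⟩

end MaxGenDeg

section Reduction

theorem exists_lt_count_of_card_mul_lt {α : Type*} [DecidableEq α] {T : Multiset α} {L : Finset α}
    {k : ℕ} (hT : ∀ a ∈ T, a ∈ L) (hk : L.card * k < T.card) : ∃ a ∈ L, k < T.count a := by
  refine Finset.exists_lt_of_sum_lt ?_
  rwa [Finset.sum_const, smul_eq_mul, Multiset.sum_count_eq_card hT]

theorem sum_mem_exponents_mul_pow {σ R : Type*} [CommSemiring R] {I J : Ideal (MvPolynomial σ R)}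
    (hJI : J ≤ I) {n D : ℕ} {α : σ →₀ ℕ} {T : Multiset (σ →₀ ℕ)}
    (hT : ∀ β ∈ T, β ∈ exponents I) (hcard : T.card = n + 1) (hD : 0 < D)
    (hα : D • α ∈ exponents (J ^ D)) (hrep : Multiset.replicate D α ≤ T) :
    T.sum ∈ exponents (J * I ^ n) := by
  obtain ⟨T', rfl⟩ := exists_add_of_le hrep
  obtain ⟨k, rfl⟩ := Nat.exists_eq_add_one.mpr hD
  have hn : k + T'.card = n := by
    rw [Multiset.card_add, Multiset.card_replicate] at hcard
    lia
  have hmem : (k + 1) • α + T'.sum ∈ exponents (J ^ (k + 1) * I ^ T'.card) :=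
    add_mem_exponents_mul hα
      (sum_mem_exponents_pow fun β hβ => hT β (Multiset.mem_add.mpr (Or.inr hβ)))
  have hle : J ^ (k + 1) * I ^ T'.card ≤ J * I ^ n := by
    rw [pow_succ', mul_assoc, ← hn, pow_add]
    exact Ideal.mul_mono_right (Ideal.mul_mono_left (Ideal.pow_right_mono hJI k))
  rw [Multiset.sum_add, Multiset.sum_replicate]
  exact exponents_mono hle hmem

-- By pigeonhole, a product of `n + 1` minimal generators none of which lies in `J` contains some
-- generator `B` times; its `D`-th power can then be replaced by an element of `J ^ D`.
theorem IsMonomialIdeal.pow_succ_eq_mul_pow {σ K : Type*} [Field K]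
    {I J : Ideal (MvPolynomial σ K)} (hI : IsMonomialIdeal I) (hJI : J ≤ I) {B : ℕ}
    (hB : ∀ α ∈ exponents I, ∃ D, 0 < D ∧ D ≤ B ∧ D • α ∈ exponents (J ^ D))
    {L : Finset (σ →₀ ℕ)} (hL : ∀ α, Minimal (· ∈ exponents I) α → α ∉ exponents J → α ∈ L)
    {n : ℕ} (hn : L.card * (B - 1) ≤ n) : I ^ (n + 1) = J * I ^ n := by
  classical
  refine le_antisymm ((hI.pow _).le_of_exponents_subset fun γ hγ => ?_)
    (pow_succ' I n ▸ Ideal.mul_mono_left hJI)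
  obtain ⟨T, hcard, hTmin, hTγ⟩ := hI.exists_minimal_sum_le hγ
  refine isUpperSet_exponents _ hTγ ?_
  have hTI : ∀ α ∈ T, α ∈ exponents I := fun α hα => (hTmin α hα).prop
  by_cases hTJ : ∃ α ∈ T, α ∈ exponents J
  · obtain ⟨α, hαT, hαJ⟩ := hTJ
    refine sum_mem_exponents_mul_pow hJI hTI hcard one_pos (nsmul_mem_exponents_pow hαJ 1) ?_
    rwa [Multiset.replicate_one, Multiset.singleton_le]
  · push Not at hTJ
    obtain ⟨α, -, hα⟩ := exists_lt_count_of_card_mul_lt (k := B - 1)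
      (fun α hα => hL α (hTmin α hα) (hTJ α hα)) (by lia)
    obtain ⟨D, hD, hDB, hDα⟩ := hB α (hTI α (Multiset.count_pos.mp (by lia)))
    exact sum_mem_exponents_mul_pow hJI hTI hcard hD hDα
      (Multiset.le_count_iff_replicate_le.mp (by lia))

end Reduction

section Vertices

open scoped Pointwise

variable {σ R K : Type*} [CommSemiring R] [Field K]

/-- The exponents in `I` which are vertices of the Newton polyhedron of `I`. -/
def vertexExponents (I : Ideal (MvPolynomial σ R)) : Set (σ →₀ ℕ) :=
  {β | realVec β ∈ (convexHull ℝ (realVec '' exponents I)).extremePoints ℝ}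

theorem image_vertexExponents (I : Ideal (MvPolynomial σ R)) :
    realVec '' vertexExponents I = (convexHull ℝ (realVec '' exponents I)).extremePoints ℝ := by
  refine (Set.image_subset_iff.mpr fun _ hβ => hβ).antisymm fun x hx => ?_
  obtain ⟨β, -, rfl⟩ := extremePoints_convexHull_subset hx
  exact ⟨β, hx, rfl⟩

theorem vertexExponents_subset_exponents (I : Ideal (MvPolynomial σ R)) :
    vertexExponents I ⊆ exponents I := fun _ hβ =>
  (realVec_injective.mem_set_image).mp (extremePoints_convexHull_subset hβ)

theorem degree_pos_of_mem_exponents {I : Ideal (MvPolynomial σ R)} (hI : I ≠ ⊤) {α : σ →₀ ℕ}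
    (hα : α ∈ exponents I) : 0 < α.degree := by
  rw [pos_iff_ne_zero, Ne, Finsupp.degree_eq_zero_iff]
  rintro rfl
  exact hI (zero_mem_exponents.mp hα)

theorem IsMonomialIdeal.realVec_mem_smul_convexHull {I : Ideal (MvPolynomial σ K)}
    (hI : IsMonomialIdeal I) (n : ℕ) {γ : σ →₀ ℕ} (hγ : γ ∈ exponents (I ^ (n + 1))) :
    realVec γ ∈ ((n + 1 : ℕ) : ℝ) • convexHull ℝ (realVec '' exponents I) := by
  induction n generalizing γ with
  | zero =>
    rw [zero_add, pow_one] at hγ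
    simpa using subset_convexHull ℝ _ (Set.mem_image_of_mem realVec hγ)
  | succ n ih =>
    rw [pow_succ, (hI.pow _).exponents_mul hI] at hγ
    obtain ⟨α, hα, β, hβ, rfl⟩ := hγ
    rw [Nat.cast_succ, (convex_convexHull ℝ _).add_smul (Nat.cast_nonneg _) zero_le_one, one_smul,
      map_add]
    exact Set.add_mem_add (ih hα) (subset_convexHull ℝ _ (Set.mem_image_of_mem realVec hβ))

-- If `γ + ρ = nβ`, then `β` is a proper convex combination of `γ / n` and `β + ρ`.
theorem IsMonomialIdeal.eq_nsmul_of_le {I : Ideal (MvPolynomial σ K)} (hI : IsMonomialIdeal I)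
    {β γ : σ →₀ ℕ} (hβ : β ∈ vertexExponents I) {n : ℕ} (hγ : γ ∈ exponents (I ^ n))
    (hle : γ ≤ n • β) : γ = n • β := by
  obtain _ | n := n
  · simpa using hle
  obtain ⟨ρ, hρ⟩ := exists_add_of_le hle
  obtain ⟨x, hx, hxγ⟩ := hI.realVec_mem_smul_convexHull n hγ
  change ((n + 1 : ℕ) : ℝ) • x = realVec γ at hxγ
  have hβρ : realVec (β + ρ) ∈ convexHull ℝ (realVec '' exponents I) :=
    subset_convexHull ℝ _ (Set.mem_image_of_mem realVec
      (isUpperSet_exponents I le_self_add (vertexExponents_subset_exponents I hβ)))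
  have hcomb : ((n + 1 : ℕ) : ℝ) • x + realVec (β + ρ) = ((n + 2 : ℕ) : ℝ) • realVec β := by
    rw [hxγ, Nat.cast_smul_eq_nsmul, ← map_nsmul, ← map_add]
    congr 1
    rw [succ_nsmul, hρ]
    abel
  have hseg : realVec β ∈ openSegment ℝ x (realVec (β + ρ)) := by
    refine ⟨(n + 1 : ℕ) / (n + 2 : ℕ), 1 / (n + 2 : ℕ), by positivity, by positivity,
      by push_cast; field_simp; ring, ?_⟩
    rw [div_eq_inv_mul, mul_smul, one_div, ← smul_add, hcomb, inv_smul_smul₀ (by positivity)]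
  obtain rfl := (mem_extremePoints_iff_left.mp hβ).2 x hx _ hβρ hseg
  rw [Nat.cast_smul_eq_nsmul, ← map_nsmul] at hxγ
  exact (realVec_injective hxγ).symm

theorem IsMonomialIdeal.degree_mul_le_maxGenDeg_pow {I : Ideal (MvPolynomial σ K)}
    (hI : IsMonomialIdeal I) (hfg : I.FG) {β : σ →₀ ℕ} (hβ : β ∈ vertexExponents I) (n : ℕ) :
    β.degree * n ≤ maxGenDeg (I ^ n) := by
  obtain ⟨α, hα, hdeg, hle⟩ := (hI.pow n).exists_degree_le_maxGenDeg hfg.pow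
    (nsmul_mem_exponents_pow (vertexExponents_subset_exponents I hβ) n)
  rwa [hI.eq_nsmul_of_le hβ hα hle, map_nsmul, smul_eq_mul, mul_comm] at hdeg

theorem exists_vertexExponents_subset_upperClosure [Finite σ] (I : Ideal (MvPolynomial σ R)) :
    ∃ V : Finset (σ →₀ ℕ), (V : Set (σ →₀ ℕ)) ⊆ vertexExponents I ∧
      ∀ α ∈ exponents I,
        realVec α ∈ upperClosure (convexHull ℝ (realVec '' (V : Set (σ →₀ ℕ)))) := by
  have hfin := finite_setOf_minimal_mem_exponents I
  have hcover : convexHull ℝ (realVec '' exponents I) ⊆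
      upperClosure (convexHull ℝ (realVec '' {α | Minimal (· ∈ exponents I) α})) := by
    refine convexHull_min ?_ (convex_upperClosure (convex_convexHull ℝ _))
    rintro _ ⟨α, hα, rfl⟩
    obtain ⟨μ, hμα, hμ⟩ := exists_minimal_le_of_wellFoundedLT (· ∈ exponents I) α hα
    exact ⟨realVec μ, subset_convexHull ℝ _ (Set.mem_image_of_mem realVec hμ),
      realVec_le_realVec.mpr hμα⟩
  obtain ⟨_, hsub, hext, hV⟩ := exists_subset_extremePoints_subset_upperClosure
    (hfin.image realVec) ((Set.image_mono fun _ hα => hα.prop).trans (subset_convexHull ℝ _)) hcover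
  obtain ⟨V, hVmin, rfl⟩ := Set.subset_image_iff.mp hsub
  refine ⟨(hfin.subset hVmin).toFinset, ?_, fun α hα => ?_⟩
  · rw [Set.Finite.coe_toFinset]
    exact fun β hβ => hext (Set.mem_image_of_mem realVec hβ)
  · rw [Set.Finite.coe_toFinset]
    exact hV (subset_convexHull ℝ _ (Set.mem_image_of_mem realVec hα))

theorem exists_nsmul_mem_exponents_truncation_pow [Fintype σ] {I : Ideal (MvPolynomial σ R)}
    (hI : I ≠ ⊤) {δ : ℕ} (hδ : ∀ β ∈ vertexExponents I, β.degree ≤ δ) {α : σ →₀ ℕ}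
    (hα : α ∈ exponents I) :
    ∃ D, 0 < D ∧ D ≤ δ ^ Fintype.card σ ∧ D • α ∈ exponents (truncation I δ ^ D) := by
  obtain ⟨V, hV, hcover⟩ := exists_vertexExponents_subset_upperClosure I
  obtain ⟨u, hu, huα⟩ := hcover α hα
  have hpos : ∀ v ∈ V, 0 < v.degree := fun v hv =>
    degree_pos_of_mem_exponents hI (vertexExponents_subset_exponents I (hV hv))
  obtain ⟨_, v, hv, rfl⟩ := convexHull_nonempty_iff.mp ⟨u, hu⟩
  obtain ⟨D, hD, hDδ, T, hTV, hDT, hTα⟩ := exists_multiset_sum_le_nsmul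
    (fun h0 => (hpos 0 h0).ne' (map_zero _)) ((hpos v hv).trans_le (hδ v (hV hv)))
    (fun v hv => hδ v (hV hv)) hu huα
  refine ⟨D, hD, hDδ, isUpperSet_exponents _ hTα (exponents_mono (Ideal.pow_le_pow_right hDT) ?_)⟩
  exact sum_mem_exponents_pow fun v hv => mem_exponents_truncation
    (vertexExponents_subset_exponents I (hV (hTV v hv))) (hδ v (hV (hTV v hv)))

end Vertices

section QuasiLinear

theorem exists_forall_ge_eq_mul_add_of_succ_le {f : ℕ → ℕ} {δ R : ℕ} (hlow : ∀ n, δ * n ≤ f n)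
    (hstep : ∀ n ≥ R, f (n + 1) ≤ δ + f n) : ∃ q₀ N : ℕ, ∀ n ≥ N, f n = δ * n + q₀ := by
  have hanti : Antitone fun k => f (R + k) - δ * (R + k) := antitone_nat_of_succ_le fun k => by
    have := hstep (R + k) (Nat.le_add_right R k)
    rw [← add_assoc, Nat.mul_succ]
    lia
  obtain ⟨N, hN⟩ := WellFoundedLT.antitone_chain_condition hanti
  refine ⟨f (R + N) - δ * (R + N), R + N, fun n hn => ?_⟩
  obtain ⟨k, rfl⟩ := Nat.exists_eq_add_of_le (le_of_add_le_left hn)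
  have hk : f (R + N) - δ * (R + N) = f (R + k) - δ * (R + k) := hN k (by lia)
  rw [hk, Nat.add_sub_cancel' (hlow _)]

theorem le_mul_add_mul_of_succ_le {f : ℕ → ℕ} {δ e R : ℕ} (hf : ∀ n, f n ≤ n * (δ + e))
    (hstep : ∀ n ≥ R, f (n + 1) ≤ δ + f n) (n : ℕ) : f n ≤ δ * n + R * e := by
  rcases le_total n R with hn | hn
  · calc f n ≤ n * (δ + e) := hf n
      _ = δ * n + n * e := by ring
      _ ≤ δ * n + R * e := by gcongr
  · induction n, hn using Nat.le_induction with
    | base => exact (hf R).trans_eq (by ring)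
    | succ n hn ih =>
      have := hstep n hn
      rw [Nat.mul_succ]
      lia

end QuasiLinear

section MainTheorem

variable {σ K R : Type*} [Field K] [CommSemiring R] {I : Ideal (MvPolynomial σ K)}

/-- The number `q` of minimal monomial generators of degree greater than `d` of a monomial ideal;
the exponents of these generators are the minimal elements of `exponents I`. -/
noncomputable def numGeneratorsAbove (I : Ideal (MvPolynomial σ R)) (d : ℕ) : ℕ :=
  {α | Minimal (· ∈ exponents I) α ∧ d < α.degree}.ncard

theorem IsMonomialIdeal.numGeneratorsAbove_eq (hI : IsMonomialIdeal I) (d : ℕ) :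
    numGeneratorsAbove I d = Set.ncard {α : σ →₀ ℕ |
      monomial α (1 : K) ∈ I ∧ monomial α (1 : K) ∉ Ideal.span (Set.range X) * I ∧
        d < (monomial α (1 : K)).totalDegree} := by
  simp only [numGeneratorsAbove, hI.minimal_mem_exponents_iff, and_assoc,
    totalDegree_monomial _ (one_ne_zero (α := K))]
  rfl

variable {δ : ℕ}

theorem IsMonomialIdeal.mul_le_maxGenDeg_pow (hI : IsMonomialIdeal I) (hfg : I.FG)
    (hδ : IsGreatest (Finsupp.degree '' vertexExponents I) δ) (n : ℕ) :
    δ * n ≤ maxGenDeg (I ^ n) := by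
  obtain ⟨⟨β, hβ, rfl⟩, -⟩ := hδ
  exact hI.degree_mul_le_maxGenDeg_pow hfg hβ n

theorem IsMonomialIdeal.le_maxGenDeg (hI : IsMonomialIdeal I) (hfg : I.FG)
    (hδ : IsGreatest (Finsupp.degree '' vertexExponents I) δ) : δ ≤ maxGenDeg I := by
  simpa using hI.mul_le_maxGenDeg_pow hfg hδ 1

theorem pos_of_isGreatest_degree_vertexExponents {I : Ideal (MvPolynomial σ R)} (hpr : I ≠ ⊤)
    (hδ : IsGreatest (Finsupp.degree '' vertexExponents I) δ) : 0 < δ := by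
  obtain ⟨⟨β, hβ, rfl⟩, -⟩ := hδ
  exact degree_pos_of_mem_exponents hpr (vertexExponents_subset_exponents I hβ)

variable [Fintype σ]

theorem isGreatest_degree_vertexExponents_iff {I : Ideal (MvPolynomial σ R)} :
    IsGreatest (Finsupp.degree '' vertexExponents I) δ ↔ IsGreatest ((fun x => ∑ i, x i) ''
      (convexHull ℝ (realVec '' exponents I)).extremePoints ℝ) (δ : ℝ) := by
  have himage : (fun x => ∑ i, x i) '' (convexHull ℝ (realVec '' exponents I)).extremePoints ℝ =
      Nat.cast '' (Finsupp.degree '' vertexExponents I) := by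
    simp only [← image_vertexExponents, Set.image_image, realVec_apply, Finsupp.degree_eq_sum,
      Nat.cast_sum]
  rw [himage]
  exact (Nat.strictMono_cast (α := ℝ)).map_isGreatest.symm

theorem IsMonomialIdeal.pow_succ_eq_truncation_mul_pow (hI : IsMonomialIdeal I) (hpr : I ≠ ⊤)
    (hδ : ∀ β ∈ vertexExponents I, β.degree ≤ δ) {n : ℕ}
    (hn : numGeneratorsAbove I δ * (δ ^ Fintype.card σ - 1) ≤ n) :
    I ^ (n + 1) = truncation I δ * I ^ n := by
  have hfin : {α | Minimal (· ∈ exponents I) α ∧ δ < α.degree}.Finite :=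
    (finite_setOf_minimal_mem_exponents I).subset fun _ hα => hα.1
  rw [numGeneratorsAbove, Set.ncard_eq_toFinset_card _ hfin] at hn
  refine hI.pow_succ_eq_mul_pow (truncation_le I δ)
    (fun α hα => exists_nsmul_mem_exponents_truncation_pow hpr hδ hα) (fun α hα hαδ => ?_) hn
  refine hfin.mem_toFinset.mpr ⟨hα, not_le.mp fun hdeg => ?_⟩
  exact hαδ (mem_exponents_truncation hα.prop hdeg)

theorem IsMonomialIdeal.maxGenDeg_pow_succ_le (hI : IsMonomialIdeal I) (hpr : I ≠ ⊤)
    (hδ : ∀ β ∈ vertexExponents I, β.degree ≤ δ) {n : ℕ}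
    (hn : numGeneratorsAbove I δ * (δ ^ Fintype.card σ - 1) ≤ n) :
    maxGenDeg (I ^ (n + 1)) ≤ δ + maxGenDeg (I ^ n) := by
  rw [hI.pow_succ_eq_truncation_mul_pow hpr hδ hn]
  exact (maxGenDeg_mul_le (IsNoetherian.noetherian _) (IsNoetherian.noetherian _)).trans
    (Nat.add_le_add_right (maxGenDeg_truncation_le I δ) _)

theorem IsMonomialIdeal.maxGenDeg_pow_le_mul_add_mul (hI : IsMonomialIdeal I) (hpr : I ≠ ⊤)
    (hδ : IsGreatest (Finsupp.degree '' vertexExponents I) δ) (n : ℕ) :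
    maxGenDeg (I ^ n) ≤
      δ * n + numGeneratorsAbove I δ * (δ ^ Fintype.card σ - 1) * (maxGenDeg I - δ) := by
  have hfg : I.FG := IsNoetherian.noetherian I
  refine le_mul_add_mul_of_succ_le (f := fun n => maxGenDeg (I ^ n)) (fun n => ?_)
    (fun n hn => hI.maxGenDeg_pow_succ_le hpr (Set.forall_mem_image.mp hδ.2) hn) n
  rw [Nat.add_sub_cancel' (hI.le_maxGenDeg hfg hδ)]
  exact maxGenDeg_pow_le hfg n

theorem delta_is_leading_coefficient_and_bounds_general (hI : IsMonomialIdeal I) (hpr : I ≠ ⊤)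
    (hδ : IsGreatest (Finsupp.degree '' vertexExponents I) δ) {q : ℕ}
    (hq : q = numGeneratorsAbove I δ) {r : ℕ}
    (hr : r = sInf {n | I ^ (n + 1) = truncation I δ * I ^ n}) :
    (∃ q₀ N : ℕ, ∀ n ≥ N, maxGenDeg (I ^ n) = δ * n + q₀) ∧
    ((r : ℝ) ≤ q * (δ : ℝ) ^ Fintype.card σ - q) ∧
    (∀ n : ℕ, (maxGenDeg (I ^ n) : ℝ) ≤
      (δ : ℝ) * n + q * ((δ : ℝ) ^ Fintype.card σ - 1) * ((maxGenDeg I : ℝ) - δ)) := by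
  subst hq hr
  have hfg : I.FG := IsNoetherian.noetherian I
  have hvert : ∀ β ∈ vertexExponents I, β.degree ≤ δ := Set.forall_mem_image.mp hδ.2
  have hpow : 0 < δ ^ Fintype.card σ :=
    pow_pos (pos_of_isGreatest_degree_vertexExponents hpr hδ) _
  refine ⟨exists_forall_ge_eq_mul_add_of_succ_le (hI.mul_le_maxGenDeg_pow hfg hδ)
    fun n hn => hI.maxGenDeg_pow_succ_le hpr hvert hn, ?_, fun n => ?_⟩
  · rw [← mul_sub_one, ← Nat.cast_pow, ← Nat.cast_pred hpow, ← Nat.cast_mul, Nat.cast_le]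
    exact Nat.sInf_le (hI.pow_succ_eq_truncation_mul_pow hpr hvert le_rfl)
  · rw [← Nat.cast_sub (hI.le_maxGenDeg hfg hδ), ← Nat.cast_pow, ← Nat.cast_pred hpow]
    exact_mod_cast hI.maxGenDeg_pow_le_mul_add_mul hpr hδ n

end MainTheorem

theorem newtonPolyhedron_eq_convexHull_realVec {K : Type*} [Field K] (s : ℕ)
    (I : Ideal (MvPolynomial (Fin s) K)) :
    newtonPolyhedron s I = convexHull ℝ (realVec '' exponents I) :=
  congrArg (convexHull ℝ) (Set.ext fun _ => exists_congr fun _ => and_congr_right fun _ => eq_comm)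

theorem le_rpow_half_self_mul (s : ℕ) {x : ℝ} (hx : 0 ≤ x) : x ≤ (s : ℝ) ^ ((s : ℝ) / 2) * x := by
  refine le_mul_of_one_le_left hx ?_
  rcases s.eq_zero_or_pos with rfl | hs
  · simp
  · exact Real.one_le_rpow (Nat.one_le_cast.mpr hs) (by positivity)

/-- for a monomial ideal `I`, with `δ = δ(I)` the maximal ℓ¹-norm of a
vertex of the Newton polyhedron, `q` the number of minimal (monomial) generators of
degree `> δ`, `J = (I_{≤δ})` and `r(I)` the corresponding reduction number:
(i) `p(I) = δ(I)`, i.e. `d(I^n) = δn + q₀` for some `q₀` and all `n ≫ 0`;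
(ii) `r(I) ≤ q·s^{s/2}δ^s − q`;
(iii) `d(I^n) − δn ≤ q(s^{s/2}δ^s − 1)(d(I) − δ)` for all `n ≥ 1`. -/
theorem delta_is_leading_coefficient_and_bounds
    {K : Type*} [Field K] (s : ℕ) (I : Ideal (MvPolynomial (Fin s) K))
    (hI : IsMonomialIdeal I) (hne : I ≠ ⊥) (hpr : I ≠ ⊤)
    (δ : ℕ)
    (hδ : IsGreatest ((fun x : Fin s → ℝ => ∑ i, x i) ''
      Set.extremePoints ℝ (newtonPolyhedron s I)) (δ : ℝ))
    (M : Ideal (MvPolynomial (Fin s) K)) (hM : M = Ideal.span (Set.range X))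
    (q : ℕ)
    (hq : q = Set.ncard {α : Fin s →₀ ℕ |
      monomial α (1 : K) ∈ I ∧ monomial α (1 : K) ∉ M * I ∧
        δ < (monomial α (1 : K)).totalDegree})
    (J : Ideal (MvPolynomial (Fin s) K))
    (hJ : J = Ideal.span {g | g ∈ I ∧ g.totalDegree ≤ δ})
    (r : ℕ) (hr : r = sInf {n | I ^ (n + 1) = J * I ^ n}) :
    (∃ q₀ N : ℕ, ∀ n ≥ N, maxGenDeg (I ^ n) = δ * n + q₀) ∧
    ((r : ℝ) ≤ q * ((s : ℝ) ^ ((s : ℝ) / 2) * (δ : ℝ) ^ s) - q) ∧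
    (∀ n : ℕ, 1 ≤ n → (maxGenDeg (I ^ n) : ℝ) ≤
      (δ : ℝ) * n + q * ((s : ℝ) ^ ((s : ℝ) / 2) * (δ : ℝ) ^ s - 1) *
        ((maxGenDeg I : ℝ) - δ)) := by
  rw [newtonPolyhedron_eq_convexHull_realVec, ← isGreatest_degree_vertexExponents_iff] at hδ
  rw [hM, ← hI.numGeneratorsAbove_eq] at hq
  rw [hJ] at hr
  obtain ⟨hlead, hred, hbound⟩ := delta_is_leading_coefficient_and_bounds_general hI hpr hδ hq hr
  rw [Fintype.card_fin] at hred hbound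
  have hδd : (0 : ℝ) ≤ maxGenDeg I - δ :=
    sub_nonneg.mpr (Nat.cast_le.mpr (hI.le_maxGenDeg (IsNoetherian.noetherian I) hδ))
  have hconst := le_rpow_half_self_mul s (pow_nonneg (Nat.cast_nonneg (α := ℝ) δ) s)
  exact ⟨hlead, hred.trans (by gcongr), fun n _ => (hbound n).trans (by gcongr)⟩
end
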